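/- arXiv:1908.05456 — 5 statements merged into one kernel-verified Lean document; each statement's English description precedes it below -/
import Mathlib

section
/- Let q be a prime power with q ≡ 3 (mod 4) and q ≠ 3, let m be a positive integer, and suppose PSL(2,q) is (2,m)-generated, i.e. there exists a generating pair (h1,h2) of H = PSL(2,q) with h1² = h2^m = 1. Then, with G = C_2 ∗ C_m, the group H is a homomorphic image of G and there exists a generating pair (h1,h2) of H such that for every group homomorphism θ : G → H and every generating pair (g1,g2) of G one has (θ(g1), θ(g2)) ≠ (h1,h2). -/
/-- `SL(2,F)` -/
abbrev SL2 (F : Type) [Field F] : Type := Matrix.SpecialLinearGroup (Fin 2) F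

/-- `PSL(2,F)`, the quotient of `SL(2,F)` by its centre `{±I}`. -/
abbrev PSL2 (F : Type) [Field F] : Type := SL2 F ⧸ Subgroup.center (SL2 F)

/-- The cyclic group of order `m`. -/
abbrev Cyc (m : ℕ) : Type := Multiplicative (ZMod m)


/-- quaternion order: `a + b A + c B + d AB`, with `A² = -1`, `B² = yB - 1`, `BA = t + yA - AB`. -/
@[ext] structure QA (R : Type) (y t : R) where
  a : R
  b : R
  c : R
  d : R

namespace QA

variable {R : Type} [CommRing R] {y t : R}

instance : Zero (QA R y t) := ⟨⟨0, 0, 0, 0⟩⟩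
instance : One (QA R y t) := ⟨⟨1, 0, 0, 0⟩⟩
instance : Add (QA R y t) := ⟨fun x z => ⟨x.a + z.a, x.b + z.b, x.c + z.c, x.d + z.d⟩⟩
instance : Neg (QA R y t) := ⟨fun x => ⟨-x.a, -x.b, -x.c, -x.d⟩⟩
instance : Sub (QA R y t) := ⟨fun x z => ⟨x.a - z.a, x.b - z.b, x.c - z.c, x.d - z.d⟩⟩
instance : Mul (QA R y t) := ⟨fun x z =>
  ⟨x.a * z.a - x.b * z.b - x.c * z.c - x.d * z.d + t * x.c * z.b - y * x.d * z.b,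
   x.a * z.b + x.b * z.a + y * x.c * z.b + x.c * z.d + t * x.d * z.b - x.d * z.c,
   x.a * z.c + x.c * z.a - x.b * z.d + y * x.c * z.c + t * x.c * z.d + x.d * z.b,
   x.a * z.d + x.d * z.a + x.b * z.c - x.c * z.b + y * x.d * z.c
     + t * x.d * z.d⟩⟩

@[simp] theorem zero_a : (0 : QA R y t).a = 0 := rfl
@[simp] theorem zero_b : (0 : QA R y t).b = 0 := rfl
@[simp] theorem zero_c : (0 : QA R y t).c = 0 := rfl
@[simp] theorem zero_d : (0 : QA R y t).d = 0 := rfl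
@[simp] theorem one_a : (1 : QA R y t).a = 1 := rfl
@[simp] theorem one_b : (1 : QA R y t).b = 0 := rfl
@[simp] theorem one_c : (1 : QA R y t).c = 0 := rfl
@[simp] theorem one_d : (1 : QA R y t).d = 0 := rfl
@[simp] theorem add_a (x z : QA R y t) : (x + z).a = x.a + z.a := rfl
@[simp] theorem add_b (x z : QA R y t) : (x + z).b = x.b + z.b := rfl
@[simp] theorem add_c (x z : QA R y t) : (x + z).c = x.c + z.c := rfl
@[simp] theorem add_d (x z : QA R y t) : (x + z).d = x.d + z.d := rfl
@[simp] theorem sub_a (x z : QA R y t) : (x - z).a = x.a - z.a := rfl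
@[simp] theorem sub_b (x z : QA R y t) : (x - z).b = x.b - z.b := rfl
@[simp] theorem sub_c (x z : QA R y t) : (x - z).c = x.c - z.c := rfl
@[simp] theorem sub_d (x z : QA R y t) : (x - z).d = x.d - z.d := rfl
@[simp] theorem neg_a (x : QA R y t) : (-x).a = -x.a := rfl
@[simp] theorem neg_b (x : QA R y t) : (-x).b = -x.b := rfl
@[simp] theorem neg_c (x : QA R y t) : (-x).c = -x.c := rfl
@[simp] theorem neg_d (x : QA R y t) : (-x).d = -x.d := rfl
@[simp] theorem mul_a (x z : QA R y t) : (x * z).a =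
  x.a * z.a - x.b * z.b - x.c * z.c - x.d * z.d + t * x.c * z.b - y * x.d * z.b := rfl
@[simp] theorem mul_b (x z : QA R y t) : (x * z).b =
  x.a * z.b + x.b * z.a + y * x.c * z.b + x.c * z.d + t * x.d * z.b - x.d * z.c := rfl
@[simp] theorem mul_c (x z : QA R y t) : (x * z).c =
  x.a * z.c + x.c * z.a - x.b * z.d + y * x.c * z.c + t * x.c * z.d + x.d * z.b := rfl
@[simp] theorem mul_d (x z : QA R y t) : (x * z).d =
  x.a * z.d + x.d * z.a + x.b * z.c - x.c * z.b + y * x.d * z.c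
     + t * x.d * z.d := rfl

instance : Ring (QA R y t) where
  add_assoc x z w := by ext <;> simp <;> ring
  zero_add x := by ext <;> simp
  add_zero x := by ext <;> simp
  add_comm x z := by ext <;> simp <;> ring
  left_distrib x z w := by ext <;> simp <;> ring
  right_distrib x z w := by ext <;> simp <;> ring
  zero_mul x := by ext <;> simp
  mul_zero x := by ext <;> simp
  mul_assoc x z w := by ext <;> simp <;> ring
  one_mul x := by ext <;> simp
  mul_one x := by ext <;> simp
  neg_add_cancel x := by ext <;> simp
  sub_eq_add_neg x z := by ext <;> simp <;> ring
  nsmul := nsmulRec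
  zsmul := zsmulRec

/-- scalars -/
def sc (r : R) : QA R y t := ⟨r, 0, 0, 0⟩
@[simp] theorem sc_a (r : R) : (sc r : QA R y t).a = r := rfl
@[simp] theorem sc_b (r : R) : (sc r : QA R y t).b = 0 := rfl
@[simp] theorem sc_c (r : R) : (sc r : QA R y t).c = 0 := rfl
@[simp] theorem sc_d (r : R) : (sc r : QA R y t).d = 0 := rfl

theorem sc_comm (r : R) (x : QA R y t) : sc r * x = x * sc r := by
  ext <;> simp <;> ring

/-- trace -/
def tr (x : QA R y t) : R := 2 * x.a + y * x.c + t * x.d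
/-- norm -/
def nrm (x : QA R y t) : R := x.a ^ 2 + x.b ^ 2 + x.c ^ 2 + x.d ^ 2 + y * x.a * x.c
  + t * x.a * x.d - t * x.b * x.c + y * x.b * x.d

theorem nrm_mul (x z : QA R y t) : nrm (x * z) = nrm x * nrm z := by
  simp only [nrm, mul_a, mul_b, mul_c, mul_d]; ring

theorem nrm_one : nrm (1 : QA R y t) = 1 := by simp [nrm]

theorem mul_conj (x : QA R y t) : x * (sc (tr x) - x) = sc (nrm x) := by
  ext <;> simp [tr, nrm] <;> ring
theorem conj_mul (x : QA R y t) : (sc (tr x) - x) * x = sc (nrm x) := by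
  ext <;> simp [tr, nrm] <;> ring

theorem tr_comm (x z : QA R y t) : tr (x * z - z * x) = 0 := by
  simp [tr]; ring

/-- A -/
def gA : QA R y t := ⟨0, 1, 0, 0⟩
/-- B -/
def gB : QA R y t := ⟨0, 0, 1, 0⟩

theorem nrm_comm_gen : nrm (gA * gB - gB * gA : QA R y t) = 4 - y ^ 2 - t ^ 2 := by
  simp [nrm, gA, gB]; ring

/-- the transition factor -/
def fac (x z : QA R y t) : R :=
  nrm (⟨(x.b * z.c - x.c * z.b) - y * (x.c * z.d - x.d * z.c), x.b * z.d - x.d * z.b,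
    x.c * z.d - x.d * z.c, 0⟩ : QA R y t)

theorem comm_eq (x z : QA R y t) : x * z - z * x =
   (⟨(x.b * z.c - x.c * z.b) - y * (x.c * z.d - x.d * z.c), x.b * z.d - x.d * z.b,
    x.c * z.d - x.d * z.c, 0⟩ : QA R y t) * (gA * gB - gB * gA) := by
  ext <;> simp [gA, gB] <;> ring

theorem nrm_comm (x z : QA R y t) :
    nrm (x * z - z * x) = fac x z * (4 - y ^ 2 - t ^ 2) := by
  rw [comm_eq, nrm_mul, nrm_comm_gen, fac]

theorem neg_sq_comm (x z : QA R y t) :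
    -((x * z - z * x) * (x * z - z * x)) = sc (nrm (x * z - z * x)) := by
  rw [← mul_conj, tr_comm]
  have : (sc 0 : QA R y t) = 0 := rfl
  rw [this, zero_sub, mul_neg]

theorem comm_conj (x z : QA R y t) :
    (x * z - z * x) * z = (sc (tr z) - z) * (x * z - z * x) := by
  ext <;> simp [tr] <;> ring
theorem comm_conj' (x z : QA R y t) :
    (x * z - z * x) * x = (sc (tr x) - x) * (x * z - z * x) := by
  ext <;> simp [tr] <;> ring

end QA

set_option linter.all false
section gen
variable {F : Type} [Field F]

/-- diagonal matrices -/
def dg (u : Fˣ) : SL2 F := ⟨!![(u : F), 0; 0, ((u⁻¹ : Fˣ) : F)], by simp [Matrix.det_fin_two]⟩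
/-- upper unipotent matrices -/
def up (x : F) : SL2 F := ⟨!![1, x; 0, 1], by simp [Matrix.det_fin_two]⟩

theorem slm (X Y : SL2 F) (i j : Fin 2) : (X * Y) i j = X i 0 * Y 0 j + X i 1 * Y 1 j := by
  rw [Matrix.SpecialLinearGroup.coe_mul, Matrix.mul_apply, Fin.sum_univ_two]
theorem sli00 (X : SL2 F) : X⁻¹ 0 0 = X 1 1 := by
  rw [Matrix.SpecialLinearGroup.coe_inv, Matrix.adjugate_fin_two]; rfl
theorem sli01 (X : SL2 F) : X⁻¹ 0 1 = -X 0 1 := by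
  rw [Matrix.SpecialLinearGroup.coe_inv, Matrix.adjugate_fin_two]; rfl
theorem sli10 (X : SL2 F) : X⁻¹ 1 0 = -X 1 0 := by
  rw [Matrix.SpecialLinearGroup.coe_inv, Matrix.adjugate_fin_two]; rfl
theorem sli11 (X : SL2 F) : X⁻¹ 1 1 = X 0 0 := by
  rw [Matrix.SpecialLinearGroup.coe_inv, Matrix.adjugate_fin_two]; rfl
theorem dg00 (u : Fˣ) : dg u 0 0 = u := rfl
theorem dg01 (u : Fˣ) : dg u 0 1 = 0 := rfl
theorem dg10 (u : Fˣ) : dg u 1 0 = 0 := rfl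
theorem dg11 (u : Fˣ) : dg u 1 1 = (u : F)⁻¹ := by rw [← Units.val_inv_eq_inv_val]; rfl
theorem up00 (u : F) : up u 0 0 = 1 := rfl
theorem up01 (u : F) : up u 0 1 = u := rfl
theorem up10 (u : F) : up u 1 0 = 0 := rfl
theorem up11 (u : F) : up u 1 1 = 1 := rfl

theorem slext (X Y : SL2 F) (h1 : X 0 0 = Y 0 0) (h2 : X 0 1 = Y 0 1) (h3 : X 1 0 = Y 1 0)
    (h4 : X 1 1 = Y 1 1) : X = Y := by
  ext i j; fin_cases i <;> fin_cases j <;> assumption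

theorem dg_mul (u v : Fˣ) : dg (u * v) = dg u * dg v := by
  apply slext <;> simp [slm, dg00, dg01, dg10, dg11, up00, up01, up10, up11, mul_comm]

/-- `dg` as a hom -/
def dgHom : Fˣ →* SL2 F := MonoidHom.mk' dg dg_mul

theorem up_add (x y : F) : up (x + y) = up x * up y := by
  apply slext <;> simp [slm, dg00, dg01, dg10, dg11, up00, up01, up10, up11, add_comm]

theorem up_neg (x : F) : up (-x) = (up x)⁻¹ := by
  rw [eq_inv_iff_mul_eq_one, ← up_add]
  apply slext <;> simp [slm, dg00, dg01, dg10, dg11, up00, up01, up10, up11]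

theorem dg_up (u : Fˣ) (x : F) : dg u * up x * (dg u)⁻¹ = up ((u : F) ^ 2 * x) := by
  rw [mul_inv_eq_iff_eq_mul]
  apply slext <;> simp [slm, dg00, dg01, dg10, dg11, up00, up01, up10, up11]
  field_simp

theorem gen_borel (H : Subgroup (SL2 F)) (h2 : (2 : F) ≠ 0) (hd : ∀ u, dg u ∈ H) (l : F)
    (hl : l ≠ 0) (hu : up l ∈ H) (x : F) : up x ∈ H := by
  have h0 : up (0 : F) ∈ H := by
    have : up (0 : F) = 1 := by apply slext <;> simp [slm, dg00, dg01, dg10, dg11, up00, up01, up10, up11]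
    rw [this]; exact H.one_mem
  have hs : ∀ z : F, up (z ^ 2 * l) ∈ H := by
    intro z
    by_cases hz : z = 0
    · simpa [hz] using h0
    · have := H.mul_mem (H.mul_mem (hd (Units.mk0 z hz)) hu) (H.inv_mem (hd (Units.mk0 z hz)))
      rwa [dg_up] at this
  have e : x = ((x / l + 1) / 2) ^ 2 * l + -(((x / l - 1) / 2) ^ 2 * l) := by
    field_simp; ring
  rw [e, up_add, up_neg]
  exact H.mul_mem (hs _) (H.inv_mem (hs _))

theorem gen_top (H : Subgroup (SL2 F)) (hd : ∀ u, dg u ∈ H) (hu : ∀ x, up x ∈ H)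
    (M : SL2 F) (hM : M ∈ H) (hM0 : M 1 0 ≠ 0) : H = ⊤ := by
  rw [eq_top_iff]
  rintro g -
  have dM := M.det_coe
  have dgg := g.det_coe
  rw [Matrix.det_fin_two] at dM dgg
  by_cases hg : g 1 0 = 0
  · have h00 : g 0 0 ≠ 0 := by
      intro h; simp [h, hg] at dgg
    have : g = up (g 0 1 * g 0 0) * dg (Units.mk0 _ h00) := by
      apply slext <;> simp [slm, dg00, dg01, dg10, dg11, up00, up01, up10, up11]
      · field_simp
      · exact hg
      · rw [hg] at dgg; field_simp; linear_combination dgg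
    rw [this]; exact H.mul_mem (hu _) (hd _)
  · have hc : M 1 0 / g 1 0 ≠ 0 := div_ne_zero hM0 hg
    set u := Units.mk0 _ hc with hu'
    set N := dg u * M with hN
    have hNH : N ∈ H := H.mul_mem (hd _) hM
    have N10 : N 1 0 = g 1 0 := by
      simp [hN, hu', slm, dg00, dg01, dg10, dg11, up00, up01, up10, up11]; field_simp
    have dN := N.det_coe
    rw [Matrix.det_fin_two] at dN
    have : g = up ((g 0 0 - N 0 0) / g 1 0) * N * up ((g 1 1 - N 1 1) / g 1 0) := by
      apply slext
      · simp [slm, dg00, dg01, dg10, dg11, up00, up01, up10, up11, N10]; field_simp; ring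
      · simp [slm, dg00, dg01, dg10, dg11, up00, up01, up10, up11, N10]; field_simp
        rw [N10] at dN; linear_combination dN - dgg
      · simp [slm, dg00, dg01, dg10, dg11, up00, up01, up10, up11, N10]
      · simp [slm, dg00, dg01, dg10, dg11, up00, up01, up10, up11, N10]; field_simp; ring
    rw [this]; exact H.mul_mem (H.mul_mem (hu _) hNH) (hu _)

theorem conj_parab (H : Subgroup (SL2 F)) (hneg : -1 ∈ H) (X g : SL2 F) (hX : X ∈ H) (hg : g ∈ H)
    (htr : X 0 0 + X 1 1 = -2) (h10 : X 1 0 ≠ 0)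
    (hcol : g 0 0 * X 1 0 = g 1 0 * (X 0 0 + 1)) : ∃ l : F, l ≠ 0 ∧ up l ∈ H := by
  have dX := X.det_coe
  have dgg := g.det_coe
  rw [Matrix.det_fin_two] at dX dgg
  set Y := -1 * (g⁻¹ * X * g) with hY
  have hYH : Y ∈ H := H.mul_mem hneg (H.mul_mem (H.mul_mem (H.inv_mem hg) hX) hg)
  have e2 : X 1 0 * g 0 0 + (X 1 1 + 1) * g 1 0 = 0 := by
    linear_combination hcol + g 1 0 * htr
  have e1 : (X 0 0 + 1) * g 0 0 + X 0 1 * g 1 0 = 0 := by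
    have : X 1 0 * ((X 0 0 + 1) * g 0 0 + X 0 1 * g 1 0) = 0 := by
      linear_combination (X 0 0 + 1) * hcol - g 1 0 * dX + g 1 0 * X 0 0 * htr
    exact (mul_eq_zero.mp this).resolve_left h10
  have hn : ∀ Z : SL2 F, ∀ i j, (-1 * Z) i j = - Z i j := by
    intro Z i j; rw [neg_one_mul]; rfl
  have y00 : Y 0 0 = 1 := by
    rw [hY]; simp only [hn, slm, sli00, sli01, sli10, sli11]
    linear_combination dgg - g 1 1 * e1 + g 0 1 * e2
  have y10 : Y 1 0 = 0 := by
    rw [hY]; simp only [hn, slm, sli00, sli01, sli10, sli11]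
    linear_combination g 1 0 * e1 - g 0 0 * e2
  have y11 : Y 1 1 = 1 := by
    have : Y 0 0 + Y 1 1 = 2 := by
      rw [hY]; simp only [hn, slm, sli00, sli01, sli10, sli11]
      linear_combination 2 * dgg - (g 0 0 * g 1 1 - g 0 1 * g 1 0) * htr
    linear_combination this - y00
  have key : Y = up (Y 0 1) := by
    apply slext
    · rw [y00, up00]
    · rw [up01]
    · rw [y10, up10]
    · rw [y11, up11]
  refine ⟨Y 0 1, ?_, key ▸ hYH⟩
  intro h0
  have : Y = 1 := by
    rw [key, h0]; apply slext <;> simp [slm, dg00, dg01, dg10, dg11, up00, up01, up10, up11]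
  have hX1 : X = -1 := by
    have h3 : g⁻¹ * X * g = -1 := by
      have := congrArg (fun z => -z) this
      simpa [hY] using this
    have : X = g * (g⁻¹ * X * g) * g⁻¹ := by group
    rw [this, h3]; simp
  apply h10
  rw [hX1]; simp

theorem pm_sq [Fintype F] (hF : Fintype.card F % 4 = 3) (x : F) (hx : x ≠ 0) :
    ∃ z : F, z ≠ 0 ∧ (x = z ^ 2 ∨ x = -z ^ 2) := by
  classical
  have hneg : ¬ IsSquare (-1 : F) := by
    rw [FiniteField.isSquare_neg_one_iff]; simp [hF]
  have h1 : quadraticChar F (-1) = -1 := quadraticChar_neg_one_iff_not_isSquare.mpr hneg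
  rcases quadraticChar_dichotomy hx with h | h
  · obtain ⟨z, hz⟩ := (quadraticChar_one_iff_isSquare hx).mp h
    refine ⟨z, ?_, Or.inl (by rw [hz]; ring)⟩
    rintro rfl; simp at hz; exact hx hz
  · have h2 : quadraticChar F (-x) = 1 := by
      rw [neg_eq_neg_one_mul, map_mul, h1, h]; norm_num
    obtain ⟨z, hz⟩ := (quadraticChar_one_iff_isSquare (neg_ne_zero.mpr hx)).mp h2
    refine ⟨z, ?_, Or.inr (by linear_combination -hz)⟩
    rintro rfl; simp at hz; exact hx hz

theorem two_ne [Fintype F] (hF : Fintype.card F % 4 = 3) : (2 : F) ≠ 0 := by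
  intro h
  have hneg : ¬ IsSquare (-1 : F) := by
    rw [FiniteField.isSquare_neg_one_iff]; simp [hF]
  apply hneg
  exact ⟨1, by linear_combination -h⟩

theorem sumsq [Fintype F] (hF : Fintype.card F % 4 = 3) (x z : F) (h : x ^ 2 + z ^ 2 = 0) :
    z = 0 := by
  by_contra hz
  have hneg : ¬ IsSquare (-1 : F) := by
    rw [FiniteField.isSquare_neg_one_iff]; simp [hF]
  apply hneg
  refine ⟨x / z, ?_⟩
  field_simp; linear_combination -h

theorem gen_core [Fintype F] (hF : Fintype.card F % 4 = 3) (H : Subgroup (SL2 F)) (a : Fˣ)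
    (ha : ∀ x, x ∈ Subgroup.zpowers a) (hneg : -1 ∈ H) (M : SL2 F) (hM : M ∈ H) (p r : F)
    (h00 : M 0 0 = p) (h01 : M 0 1 = r) (h10 : M 1 0 = r) (h11 : M 1 1 = p)
    (hp : p ≠ 0) (hr : r * ((a : F) ^ 2 - 1) = 2 * a) (hd : dg a ∈ H) (ha1 : (a : F) ^ 2 - 1 ≠ 0) :
    H = ⊤ := by
  have h2 := two_ne hF
  have ha0 : (a : F) ≠ 0 := a.ne_zero
  have hr0 : r ≠ 0 := by
    rintro rfl; rw [zero_mul] at hr; exact mul_ne_zero h2 ha0 hr.symm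
  have hdd : ∀ u, dg u ∈ H := by
    intro u
    have : Subgroup.zpowers a ≤ H.comap dgHom := by
      rw [Subgroup.zpowers_le]; exact hd
    exact this (ha u)
  have dM := M.det_coe
  rw [Matrix.det_fin_two, h00, h01, h10, h11] at dM
  set X := dg a * M * (dg a)⁻¹ * M⁻¹ with hX
  have hXH : X ∈ H := H.mul_mem (H.mul_mem (H.mul_mem hd hM) (H.inv_mem hd)) (H.inv_mem hM)
  have x00 : X 0 0 = p ^ 2 - a ^ 2 * r ^ 2 := by
    rw [hX]; simp only [slm, sli00, sli01, sli10, sli11, dg00, dg01, dg10, dg11, h00, h01, h10, h11]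
    field_simp; ring
  have x11 : X 1 1 = p ^ 2 - r ^ 2 / a ^ 2 := by
    rw [hX]; simp only [slm, sli00, sli01, sli10, sli11, dg00, dg01, dg10, dg11, h00, h01, h10, h11]
    field_simp; ring
  have x10 : X 1 0 = p * r * (1 - a ^ 2) / a ^ 2 := by
    rw [hX]; simp only [slm, sli00, sli01, sli10, sli11, dg00, dg01, dg10, dg11, h00, h01, h10, h11]
    field_simp; ring
  have hx10 : X 1 0 ≠ 0 := by
    rw [x10]
    refine div_ne_zero (mul_ne_zero (mul_ne_zero hp hr0) ?_) (pow_ne_zero _ ha0)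
    intro h; apply ha1; linear_combination -h
  have htr : X 0 0 + X 1 1 = -2 := by
    rw [x00, x11]; field_simp
    linear_combination 2 * a ^ 2 * dM - (r * ((a : F) ^ 2 - 1) + 2 * a) * hr
  have ha2 : (a : F) ^ 2 + 1 ≠ 0 := by
    intro h
    have := sumsq hF (a : F) 1 (by linear_combination h)
    exact one_ne_zero this
  have hx00 : X 0 0 + 1 ≠ 0 := by
    have : (X 0 0 + 1) * ((a : F) ^ 2 - 1) = - 2 * (a ^ 2 + 1) := by
      rw [x00]
      linear_combination (a ^ 2 - 1) * dM - (r * ((a : F) ^ 2 - 1) + 2 * a) * hr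
    intro h; rw [h] at this
    have h3 : (2 : F) * (a ^ 2 + 1) = 0 := by linear_combination this
    exact (mul_ne_zero h2 ha2) h3
  -- conjugating element
  have hg : ∃ g ∈ H, g 0 0 * X 1 0 = g 1 0 * (X 0 0 + 1) := by
    obtain ⟨z, hz, hzz⟩ := pm_sq hF (r * (X 0 0 + 1) / (p * X 1 0))
      (div_ne_zero (mul_ne_zero hr0 hx00) (mul_ne_zero hp hx10))
    rw [div_eq_iff (mul_ne_zero hp hx10), div_eq_iff (mul_ne_zero hp hx10)] at hzz
    rcases hzz with e | e
    · refine ⟨dg (Units.mk0 z hz) * M, H.mul_mem (hdd _) hM, ?_⟩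
      simp only [slm, sli00, sli01, sli10, sli11, dg00, dg01, dg10, dg11, h00, h01, h10, h11]
      simp only [Units.val_mk0]; field_simp; linear_combination -e
    · refine ⟨dg (Units.mk0 z hz) * M⁻¹, H.mul_mem (hdd _) (H.inv_mem hM), ?_⟩
      simp only [slm, sli00, sli01, sli10, sli11, dg00, dg01, dg10, dg11, h00, h01, h10, h11]
      simp only [Units.val_mk0]; field_simp; linear_combination e
  obtain ⟨g, hgH, hgc⟩ := hg
  obtain ⟨l, hl, hlH⟩ := conj_parab H hneg X g hXH hgH htr hx10 hgc
  exact gen_top H hdd (gen_borel H h2 hdd l hl hlH) M hM (by rw [h10]; exact hr0)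

theorem gen_pair [Fintype F] (hF : Fintype.card F % 4 = 3) (hF3 : Fintype.card F ≠ 3) :
    ∃ M1 M2 : SL2 F, Subgroup.closure {(M1 : PSL2 F), (M2 : PSL2 F)} = ⊤ ∧
      M1 0 0 + M1 1 1 ≠ 0 ∧ M2 0 0 + M2 1 1 ≠ 0 ∧
      ((M1 : Matrix (Fin 2) (Fin 2) F) * M2.1 - M2.1 * M1.1) *
        ((M1 : Matrix (Fin 2) (Fin 2) F) * M2.1 - M2.1 * M1.1) = (-4 : F) • 1 := by
  classical
  have h2 := two_ne hF
  obtain ⟨a, ha⟩ := IsCyclic.exists_generator (α := Fˣ)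
  have ha0 : (a : F) ≠ 0 := a.ne_zero
  have ha1 : (a : F) ^ 2 - 1 ≠ 0 := by
    intro h
    have hu : a ^ 2 = 1 := by ext; push_cast; linear_combination h
    have h3 : orderOf a = Nat.card Fˣ := orderOf_eq_card_of_forall_mem_zpowers ha
    have h4 : orderOf a ≤ 2 := orderOf_le_of_pow_eq_one (by norm_num) hu
    rw [h3, Nat.card_eq_fintype_card, Fintype.card_units] at h4
    omega
  have ha2 : (a : F) ^ 2 + 1 ≠ 0 := by
    intro h
    exact one_ne_zero (sumsq hF (a : F) 1 (by linear_combination h))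
  set p : F := (a ^ 2 + 1) / (a ^ 2 - 1) with hp
  set r : F := 2 * a / (a ^ 2 - 1) with hr
  have hdet : p * p - r * r = 1 := by
    rw [hp, hr]; field_simp; ring
  let M : SL2 F := ⟨!![p, r; r, p], by rw [Matrix.det_fin_two]; simpa using hdet⟩
  have hp0 : p ≠ 0 := div_ne_zero ha2 ha1
  refine ⟨dg a, M, ?_, ?_, ?_, ?_⟩
  · set K := Subgroup.closure {(dg a : PSL2 F), (M : PSL2 F)} with hK
    have : K.comap (QuotientGroup.mk' (Subgroup.center (SL2 F))) = ⊤ := by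
      refine gen_core hF _ a ha ?_ M ?_ p r rfl rfl rfl rfl hp0 ?_ ?_ ha1
      · rw [Subgroup.mem_comap]
        have : QuotientGroup.mk' (Subgroup.center (SL2 F)) (-1) = 1 := by
          rw [QuotientGroup.mk'_apply, QuotientGroup.eq_one_iff]
          rw [Matrix.SpecialLinearGroup.mem_center_iff]
          exact ⟨-1, by simp, by ext i j; fin_cases i <;> fin_cases j <;> simp⟩
        rw [this]; exact K.one_mem
      · exact Subgroup.subset_closure (by simp)
      · rw [hr]; field_simp
      · exact Subgroup.subset_closure (by simp)
    rw [eq_top_iff]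
    rintro x -
    obtain ⟨X, rfl⟩ := QuotientGroup.mk_surjective x
    have : X ∈ K.comap (QuotientGroup.mk' (Subgroup.center (SL2 F))) := by rw [this]; trivial
    exact this
  · rw [dg00, dg11]; field_simp; exact div_ne_zero ha2 ha0
  · show p + p ≠ 0
    rw [← two_mul]; exact mul_ne_zero h2 hp0
  · have : (dg a).1 = !![(a : F), 0; 0, (a : F)⁻¹] := by
      rw [← Units.val_inv_eq_inv_val]; rfl
    rw [this]
    show (!![(a : F), 0; 0, (a : F)⁻¹] * !![p, r; r, p] - !![p, r; r, p] * !![(a : F), 0; 0, (a : F)⁻¹])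
     * (!![(a : F), 0; 0, (a : F)⁻¹] * !![p, r; r, p] - !![p, r; r, p] * !![(a : F), 0; 0, (a : F)⁻¹]) = _
    ext i j
    have e : r * (a - (a : F)⁻¹) = 2 := by rw [hr]; field_simp
    fin_cases i <;> fin_cases j <;> simp [Matrix.mul_apply, Fin.sum_univ_two]
    · linear_combination -(r * (a - (a : F)⁻¹) + 2) * e
    · ring
    · ring
    · linear_combination -(r * (a - (a : F)⁻¹) + 2) * e
end gen

section cop
open Multiplicative in
theorem cyc_hom {H : Type} [Group H] (m : ℕ) (h : H) (hh : h ^ m = 1) :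
    ∃ f : Cyc m →* H, f (ofAdd 1) = h := by
  let f0 : ℤ →+ Additive H := zmultiplesHom (Additive H) (Additive.ofMul h)
  have hf0 : f0 m = 0 := by
    simp only [f0, zmultiplesHom_apply, natCast_zsmul]
    rw [← ofMul_pow, hh]; rfl
  let f1 : ZMod m →+ Additive H := ZMod.lift m ⟨f0, hf0⟩
  refine ⟨AddMonoidHom.toMultiplicativeLeft f1, ?_⟩
  have : f1 ((1 : ℤ) : ZMod m) = f0 1 := ZMod.lift_coe m ⟨f0, hf0⟩ 1
  rw [Int.cast_one] at this
  show (f1 1).toMul = h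
  rw [this]; simp [f0]

open Multiplicative in
theorem cyc_gen (m : ℕ) (x : Cyc m) : ∃ n : ℤ, x = (ofAdd (1 : ZMod m)) ^ n := by
  obtain ⟨n, hn⟩ := ZMod.intCast_surjective (toAdd x)
  refine ⟨n, ?_⟩
  rw [← ofAdd_zsmul, zsmul_one, hn]; rfl

open Multiplicative Monoid.Coprod in
theorem cop_gen (m : ℕ) : Subgroup.closure
    {(inl (ofAdd 1) : Monoid.Coprod (Cyc 2) (Cyc m)), inr (ofAdd 1)} = ⊤ := by
  rw [eq_top_iff]
  rintro g -
  induction g using Monoid.Coprod.induction_on with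
  | inl x =>
    obtain ⟨n, rfl⟩ := cyc_gen 2 x
    rw [map_zpow]
    exact Subgroup.zpow_mem _ (Subgroup.subset_closure (by simp)) _
  | inr x =>
    obtain ⟨n, rfl⟩ := cyc_gen m x
    rw [map_zpow]
    exact Subgroup.zpow_mem _ (Subgroup.subset_closure (by simp)) _
  | mul x y hx hy => exact Subgroup.mul_mem _ hx hy

end cop

namespace QA
variable {R : Type} [CommRing R] {y t : R}

theorem inv_eq (x : (QA R y t)ˣ) (h : nrm (x : QA R y t) = 1) :
    ((x⁻¹ : (QA R y t)ˣ) : QA R y t) =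
      (sc (tr (x : QA R y t)) : QA R y t) - (x : QA R y t) := by
  apply Units.inv_eq_of_mul_eq_one_right
  rw [mul_conj, h]; rfl

theorem step (x1 x2 : (QA R y t)ˣ) (h1 : nrm (x1 : QA R y t) = 1) (h2 : nrm (x2 : QA R y t) = 1)
    (w : QA R y t) (hw : w = x1 * x2 - x2 * x1) (e : QA R y t)
    (he1 : ∃ D, e * x1 - x1 * e = D * w) (he2 : ∃ D, e * x2 - x2 * e = D * w)
    (x : (QA R y t)ˣ) (hx : x ∈ Subgroup.closure {x1, x2, -1}) :
    nrm (x : QA R y t) = 1 ∧ (∃ D, w * x = D * w) ∧ (∃ D, e * x - x * e = D * w) := by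
  induction hx using Subgroup.closure_induction with
  | mem x hx =>
    rcases hx with rfl | rfl | rfl
    · exact ⟨h1, ⟨_, hw ▸ comm_conj' _ _⟩, he1⟩
    · exact ⟨h2, ⟨_, hw ▸ comm_conj _ _⟩, he2⟩
    · exact ⟨by simp [nrm], ⟨-1, by simp⟩, ⟨0, by simp⟩⟩
  | one => exact ⟨by simp [nrm], ⟨1, by simp⟩, ⟨0, by simp⟩⟩
  | mul x z _ _ ihx ihz =>
    obtain ⟨nx, ⟨D1, hD1⟩, ⟨E1, hE1⟩⟩ := ihx
    obtain ⟨nz, ⟨D2, hD2⟩, ⟨E2, hE2⟩⟩ := ihz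
    refine ⟨by rw [Units.val_mul, nrm_mul, nx, nz, one_mul], ⟨D1 * D2, ?_⟩, ⟨E1 * D2 + x * E2, ?_⟩⟩
    · rw [Units.val_mul, ← mul_assoc, hD1, mul_assoc, hD2, mul_assoc]
    · have e0 : e * (x * z : QA R y t) - (x * z) * e = (e * x - x * e) * z + x * (e * z - z * e) := by
        noncomm_ring
      rw [Units.val_mul, e0, hE1, hE2, mul_assoc E1, hD2, add_mul, mul_assoc, mul_assoc]
  | inv x _ ihx =>
    obtain ⟨nx, ⟨D1, hD1⟩, ⟨E1, hE1⟩⟩ := ihx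
    have hi := inv_eq x nx
    refine ⟨?_, ⟨sc (tr (x : QA R y t)) - D1, ?_⟩, ⟨-E1, ?_⟩⟩
    · have := nrm_mul (x : QA R y t) ((x⁻¹ : (QA R y t)ˣ) : QA R y t)
      rw [Units.mul_inv, nrm_one, nx, one_mul] at this
      exact this.symm
    · rw [hi, mul_sub, hD1, sub_mul, sc_comm]
    · rw [hi, mul_sub, sub_mul, sc_comm, neg_mul, ← hE1]; abel

theorem fac_unit (x1 x2 gA' gB' : (QA R y t)ˣ) (h1 : nrm (x1 : QA R y t) = 1)
    (h2 : nrm (x2 : QA R y t) = 1) (hA : (gA' : QA R y t) = gA) (hB : (gB' : QA R y t) = gB)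
    (hAc : gA' ∈ Subgroup.closure {x1, x2, -1}) (hBc : gB' ∈ Subgroup.closure {x1, x2, -1}) :
    ∃ d : R, 4 - y ^ 2 - t ^ 2 = d * (fac (x1 : QA R y t) x2) * (4 - y ^ 2 - t ^ 2) := by
  obtain ⟨-, -, D1, hD1⟩ := step x1 x2 h1 h2 _ rfl (x1 : QA R y t) ⟨0, by simp⟩ ⟨1, by simp⟩ _ hAc
  obtain ⟨-, -, D2, hD2⟩ := step x1 x2 h1 h2 _ rfl (x2 : QA R y t) ⟨-1, by simp⟩ ⟨0, by simp⟩ _ hAc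
  obtain ⟨-, -, D, hD⟩ := step x1 x2 h1 h2 _ rfl (gA' : QA R y t)
    ⟨-D1, by rw [neg_mul, ← hD1]; abel⟩ ⟨-D2, by rw [neg_mul, ← hD2]; abel⟩ _ hBc
  rw [hA, hB] at hD
  refine ⟨nrm D, ?_⟩
  rw [mul_assoc, ← nrm_comm, ← nrm_mul, ← hD, nrm_comm_gen]

/-- specialization -/
def evm {F : Type} [Field F] {y : F} (s : F) :
    QA (Polynomial F) (Polynomial.C y) Polynomial.X →+* QA F y s where
  toFun x := ⟨x.a.eval s, x.b.eval s, x.c.eval s, x.d.eval s⟩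
  map_one' := by ext <;> simp
  map_zero' := by ext <;> simp
  map_add' x z := by ext <;> simp
  map_mul' x z := by ext <;> simp

section sp
variable {F : Type} [Field F] {y : F} (s : F)
  (x z : QA (Polynomial F) (Polynomial.C y) Polynomial.X)
@[simp] theorem evm_a : (evm s x).a = x.a.eval s := rfl
@[simp] theorem evm_b : (evm s x).b = x.b.eval s := rfl
@[simp] theorem evm_c : (evm s x).c = x.c.eval s := rfl
@[simp] theorem evm_d : (evm s x).d = x.d.eval s := rfl
theorem evm_nrm : nrm (evm s x) = (nrm x).eval s := by simp [nrm]
theorem evm_tr : tr (evm s x) = (tr x).eval s := by simp [tr]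
theorem evm_fac : fac (evm s x) (evm s z) = (fac x z).eval s := by simp [fac, nrm]
theorem evm_sc (r : Polynomial F) :
    evm s (sc r : QA (Polynomial F) (Polynomial.C y) Polynomial.X) = sc (r.eval s) := by
  ext <;> simp

/-- parity -/
def sh {s : F} (x : QA F y s) : Prop := (x.b = 0 ∧ x.d = 0) ∨ (x.a = 0 ∧ x.c = 0)

theorem sh_mul (x z : QA F y 0) (hx : sh x) (hz : sh z) : sh (x * z) := by
  rcases hx with ⟨h1, h2⟩ | ⟨h1, h2⟩ <;> rcases hz with ⟨h3, h4⟩ | ⟨h3, h4⟩ <;>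
    simp [sh, h1, h2, h3, h4]

theorem sh_conj (x : QA F y 0) (hx : sh x) : sh (sc (tr x) - x) := by
  rcases hx with ⟨h1, h2⟩ | ⟨h1, h2⟩ <;> simp [sh, h1, h2, tr]

theorem shape_calc (x z : QA F y 0) (hx : sh x) (hz : sh z) (nx : nrm x = 1) (nz : nrm z = 1)
    (hf : fac x z ≠ 0) : ∃ α τ : F, fac x z = α ^ 2 ∧ τ ^ 2 + (4 - y ^ 2) * α ^ 2 = 4 ∧
      (tr x = 0 ∨ tr z = 0) := by
  rcases hx with ⟨h1, h2⟩ | ⟨h1, h2⟩ <;> rcases hz with ⟨h3, h4⟩ | ⟨h3, h4⟩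
  · exfalso; apply hf; simp [fac, nrm, h1, h2, h3, h4]
  · refine ⟨x.c, x.c * y + 2 * x.a, ?_, ?_, ?_⟩
    · simp [fac, nrm, h1, h2, h3, h4] at nx nz ⊢
      linear_combination x.c ^ 2 * nz
    · simp [nrm, h1, h2] at nx
      linear_combination 4 * nx
    · right; simp [tr, h3, h4]
  · refine ⟨z.c, z.c * y + 2 * z.a, ?_, ?_, ?_⟩
    · simp [fac, nrm, h1, h2, h3, h4] at nx nz ⊢
      linear_combination z.c ^ 2 * nx
    · simp [nrm, h3, h4] at nz
      linear_combination 4 * nz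
    · left; simp [tr, h1, h2]
  · refine ⟨x.b * z.d - x.d * z.b,
      2 * x.b * z.b + y * (x.b * z.d + x.d * z.b) + 2 * x.d * z.d, ?_, ?_, ?_⟩
    · simp [fac, nrm, h1, h2, h3, h4]
    · simp [nrm, h1, h2, h3, h4] at nx nz
      linear_combination 4 * nz + 4 * (z.b ^ 2 + z.d ^ 2 + y * z.b * z.d) * nx
    · left; simp [tr, h1, h2]
end sp

/-- matrix representation -/
def mt {F : Type} [Field F] {y s : F} (A B : Matrix (Fin 2) (Fin 2) F) (hA : A * A = -1)
    (hB : B * B = y • B - 1) (hBA : B * A = s • (1 : Matrix (Fin 2) (Fin 2) F) + y • A - A * B) :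
    QA F y s →+* Matrix (Fin 2) (Fin 2) F where
  toFun x := x.a • (1 : Matrix (Fin 2) (Fin 2) F) + x.b • A + x.c • B + x.d • (A * B)
  map_one' := by simp
  map_zero' := by simp
  map_add' x z := by simp; module
  map_mul' x z := by
    have e1 : A * (A * B) = -B := by rw [← mul_assoc, hA, neg_one_mul]
    have e2 : B * (A * B) = s • B + A := by
      rw [← mul_assoc, hBA, sub_mul, add_mul, mul_assoc A, hB, mul_sub]; simp
      abel
    have e3 : A * B * A = s • A - y • (1 : Matrix (Fin 2) (Fin 2) F) + B := by
      rw [mul_assoc, hBA, mul_sub, mul_add, e1]; simp [hA]; module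
    have e4 : A * B * B = y • (A * B) - A := by
      rw [mul_assoc, hB, mul_sub]; simp
    have e5 : A * B * (A * B) = s • (A * B) - 1 := by
      rw [mul_assoc, e2, mul_add, hA]; simp; module
    simp only [mul_add, add_mul, smul_mul_assoc, mul_smul_comm, hA, hB, hBA, e1, e2, e3, e4, e5,
      one_mul, mul_one, mul_a, mul_b, mul_c, mul_d]
    module
end QA

section fin
variable {F : Type} [Field F]

theorem psl_eq (M N : SL2 F) (h : (M : PSL2 F) = N) : M = N ∨ M = -N := by
  rw [QuotientGroup.eq, Matrix.SpecialLinearGroup.mem_center_iff] at h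
  obtain ⟨r, hr, h⟩ := h
  rw [Fintype.card_fin] at hr
  have h' : N.1 = r • M.1 := by
    have : N = M * (M⁻¹ * N) := by group
    rw [this, Matrix.SpecialLinearGroup.coe_mul, ← h]
    simp [Matrix.scalar_apply, ← Matrix.smul_one_eq_diagonal]
  rcases mul_self_eq_one_iff.mp ((pow_two r).symm.trans hr) with h1 | h1
  · left; apply Subtype.ext; rw [h', h1, one_smul]
  · right; apply Subtype.ext
    show M.1 = -N.1
    rw [h', h1, neg_one_smul, neg_neg]

theorem psl_neg (M : SL2 F) : ((-M : SL2 F) : PSL2 F) = M := by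
  rw [QuotientGroup.eq, Matrix.SpecialLinearGroup.mem_center_iff]
  refine ⟨-1, by simp, ?_⟩
  have : (-M)⁻¹ * M = -1 := by
    have h : (-M)⁻¹ = -M⁻¹ := inv_eq_of_mul_eq_one_right (by simp)
    rw [h, neg_mul, inv_mul_cancel]
  rw [this]
  ext i j
  fin_cases i <;> fin_cases j <;> simp

theorem scal_one (M : SL2 F) (k : F) (h : M.1 = k • 1) : (M : PSL2 F) = 1 := by
  have hd := M.2
  rw [h, Matrix.det_fin_two] at hd
  simp at hd
  have : M = 1 ∨ M = -1 := by
    rcases mul_self_eq_one_iff.mp hd with h1 | h1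
    · left; apply Subtype.ext; rw [h, h1, one_smul]; rfl
    · right; apply Subtype.ext; rw [h, h1, neg_one_smul]; rfl
  rcases this with rfl | rfl
  · rfl
  · rw [psl_neg]; rfl

theorem mat_ext (X Y : Matrix (Fin 2) (Fin 2) F) (h1 : X 0 0 = Y 0 0) (h2 : X 0 1 = Y 0 1)
    (h3 : X 1 0 = Y 1 0) (h4 : X 1 1 = Y 1 1) : X = Y := by
  ext i j; fin_cases i <;> fin_cases j <;> assumption

theorem cayley (M : SL2 F) : M.1 * M.1 = (M 0 0 + M 1 1) • M.1 - 1 := by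
  have hd := M.2
  rw [Matrix.det_fin_two] at hd
  apply mat_ext <;> simp [Matrix.mul_apply, Fin.sum_univ_two]
  · linear_combination -hd
  · ring
  · ring
  · linear_combination -hd

theorem rel_BA (A B : SL2 F) (hA : A 0 0 + A 1 1 = 0) : B.1 * A.1 =
    ((A * B) 0 0 + (A * B) 1 1) • (1 : Matrix (Fin 2) (Fin 2) F) + (B 0 0 + B 1 1) • A.1
      - A.1 * B.1 := by
  have h : A 1 1 = - A 0 0 := by linear_combination hA
  rw [slm, slm]
  apply mat_ext <;> simp [Matrix.mul_apply, Fin.sum_univ_two] <;> rw [h] <;> ring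

theorem invol (A : SL2 F) (hA : (A : PSL2 F) ≠ 1) (hA2 : (A : PSL2 F) ^ 2 = 1) :
    A.1 * A.1 = -1 ∧ A 0 0 + A 1 1 = 0 := by
  have h : ((A * A : SL2 F) : PSL2 F) = ((1 : SL2 F) : PSL2 F) := by
    rw [pow_two] at hA2; exact hA2
  have key : ∀ r : F, A.1 * A.1 = r • 1 → A 0 0 + A 1 1 = 0 := by
    intro r hr
    by_contra hne
    apply hA
    rw [cayley] at hr
    apply scal_one A ((A 0 0 + A 1 1)⁻¹ * (r + 1))
    rw [mul_smul, add_smul, ← hr, one_smul, sub_add_cancel, smul_smul, inv_mul_cancel₀ hne,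
      one_smul]
  have h0 : A 0 0 + A 1 1 = 0 := by
    rcases psl_eq _ _ h with h1 | h1
    · apply key 1
      rw [← Matrix.SpecialLinearGroup.coe_mul, h1, one_smul]; rfl
    · apply key (-1)
      rw [← Matrix.SpecialLinearGroup.coe_mul, h1, neg_one_smul]; rfl
  refine ⟨?_, h0⟩
  rw [cayley, h0, zero_smul, zero_sub]

end fin

namespace QA
variable {F : Type} [Field F] {y : F}
open Polynomial

theorem core [Fintype F] (hF : Fintype.card F % 4 = 3) {s : F} (A B : Matrix (Fin 2) (Fin 2) F)
    (hA : A * A = -1) (hB : B * B = y • B - 1)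
    (hBA : B * A = s • (1 : Matrix (Fin 2) (Fin 2) F) + y • A - A * B)
    (x1 x2 a' b' : (QA F[X] (C y) X)ˣ)
    (n1 : nrm (x1 : QA F[X] (C y) X) = 1) (n2 : nrm (x2 : QA F[X] (C y) X) = 1)
    (s1 : sh (evm 0 (x1 : QA F[X] (C y) X))) (s2 : sh (evm 0 (x2 : QA F[X] (C y) X)))
    (ha : (a' : QA F[X] (C y) X) = gA) (hb : (b' : QA F[X] (C y) X) = gB)
    (hac : a' ∈ Subgroup.closure {x1, x2, -1}) (hbc : b' ∈ Subgroup.closure {x1, x2, -1})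
    (M1 M2 : SL2 F)
    (h1 : M1.1 = mt A B hA hB hBA (evm s x1)) (h2 : M2.1 = mt A B hA hB hBA (evm s x2))
    (t1 : M1 0 0 + M1 1 1 ≠ 0) (t2 : M2 0 0 + M2 1 1 ≠ 0)
    (hw : (M1.1 * M2.1 - M2.1 * M1.1) * (M1.1 * M2.1 - M2.1 * M1.1) = (-4 : F) • 1) : False := by
  obtain ⟨d, hd⟩ := fac_unit x1 x2 a' b' n1 n2 ha hb hac hbc
  have hpne : (4 - (C y) ^ 2 - X ^ 2 : F[X]) ≠ 0 := by
    intro h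
    have h4 : (4 : F[X]) = C 4 := rfl
    have := congrArg (fun p => coeff p 2) h
    rw [h4, ← C_pow, ← C_sub] at this
    simp only [coeff_sub, coeff_C, coeff_X_pow] at this
    simp at this
  have hu : d * fac (x1 : QA F[X] (C y) X) x2 = 1 := by
    apply mul_right_cancel₀ hpne
    rw [one_mul]; exact hd.symm
  have hu' : IsUnit (fac (x1 : QA F[X] (C y) X) x2) := IsUnit.of_mul_eq_one_right _ hu
  obtain ⟨c, hc, hcf⟩ := Polynomial.isUnit_iff.mp hu'
  have hc0 : c ≠ 0 := hc.ne_zero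
  have hs4 : c * (4 - y ^ 2 - s ^ 2) = 4 := by
    have e := neg_sq_comm (evm s (x1 : QA F[X] (C y) X)) (evm s (x2 : QA F[X] (C y) X))
    have e' := congrArg (mt A B hA hB hBA) e
    rw [nrm_comm, evm_fac, ← hcf, eval_C] at e'
    simp only [map_neg, map_mul, map_sub, ← h1, ← h2] at e'
    rw [hw] at e'
    have := congrFun (congrFun e' 0) 0
    simp [mt] at this
    exact this.symm
  have hcf0 : fac (evm 0 (x1 : QA F[X] (C y) X)) (evm 0 (x2 : QA F[X] (C y) X)) = c := by
    rw [evm_fac, ← hcf, eval_C]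
  obtain ⟨α, τ, hα, hτ, htr⟩ := shape_calc _ _ s1 s2 (by rw [evm_nrm, n1, eval_one])
    (by rw [evm_nrm, n2, eval_one]) (by rw [hcf0]; exact hc0)
  rw [hcf0] at hα
  have hz := sumsq hF τ (α * s) (by rw [hα] at hs4; linear_combination hτ - hs4)
  have hs : s = 0 := by
    rcases mul_eq_zero.mp hz with h | h
    · exfalso; apply hc0; rw [hα, h]; ring
    · exact h
  subst hs
  have key : ∀ (x : (QA F[X] (C y) X)ˣ) (M : SL2 F), nrm (x : QA F[X] (C y) X) = 1 →
      M.1 = mt A B hA hB hBA (evm 0 x) → M 0 0 + M 1 1 ≠ 0 →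
      tr (evm 0 (x : QA F[X] (C y) X)) = 0 → False := by
    intro x M nx hM ht hx
    have e := mul_conj (evm 0 (x : QA F[X] (C y) X))
    rw [hx, evm_nrm, nx, eval_one] at e
    have e' := congrArg (mt A B hA hB hBA) e
    rw [map_mul, map_sub, ← hM] at e'
    have z0 : (sc 0 : QA F y 0) = 0 := rfl
    have z1 : (sc 1 : QA F y 0) = 1 := rfl
    rw [z0, z1, map_zero, map_one, zero_sub, mul_neg, cayley] at e'
    have e2 : (M 0 0 + M 1 1) • M.1 = 0 := by
      rw [neg_sub] at e'
      have := sub_eq_self.mp e'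
      exact this
    have e3 : M.1 = 0 := (smul_eq_zero.mp e2).resolve_left ht
    have := M.2
    rw [e3] at this
    simp [Matrix.det_fin_two] at this
  rcases htr with h | h
  · exact key x1 M1 n1 h1 t1 h
  · exact key x2 M2 n2 h2 t2 h

end QA

namespace QA
open Polynomial

theorem mem_pm {R : Type} [Ring R] (x : Rˣ) (h : x ∈ Subgroup.zpowers (-1 : Rˣ)) :
    x = 1 ∨ x = -1 := by
  obtain ⟨k, rfl⟩ := Subgroup.mem_zpowers_iff.mp h
  rcases Int.even_or_odd k with h | h
  · left; exact h.neg_one_zpow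
  · right; exact h.neg_one_zpow

theorem pm_normal {R : Type} [Ring R] : (Subgroup.zpowers (-1 : Rˣ)).Normal := by
  constructor
  intro x hx g
  rcases mem_pm x hx with rfl | rfl
  · simpa using Subgroup.one_mem _
  · simpa using Subgroup.mem_zpowers (-1 : Rˣ)

theorem gB_pow {F : Type} [Field F] {y : F} (n : ℕ) : ∃ r k : F,
    (gB : QA F[X] (C y) X) ^ n = ⟨C r, 0, C k, 0⟩ := by
  induction n with
  | zero => exact ⟨1, 0, by ext <;> simp⟩
  | succ n ih =>
    obtain ⟨r, k, h⟩ := ih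
    refine ⟨-k, r + y * k, ?_⟩
    rw [pow_succ, h]
    ext1 <;> simp [gB]

open Multiplicative Monoid.Coprod in
theorem lift_ex {F : Type} [Field F] {y s : F} (m : ℕ) (A B : SL2 F)
    (hA : A.1 * A.1 = -1) (hB : B.1 * B.1 = y • B.1 - 1)
    (hBA : B.1 * A.1 = s • (1 : Matrix (Fin 2) (Fin 2) F) + y • A.1 - A.1 * B.1)
    (hBs : (B : PSL2 F) ≠ 1) (hBm : (B : PSL2 F) ^ m = 1)
    (θ : Monoid.Coprod (Cyc 2) (Cyc m) →* PSL2 F)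
    (hθA : θ (inl (ofAdd 1)) = A) (hθB : θ (inr (ofAdd 1)) = B)
    (g1 g2 : Monoid.Coprod (Cyc 2) (Cyc m)) (hg : Subgroup.closure {g1, g2} = ⊤) :
    ∃ x1 x2 a' b' : (QA F[X] (C y) X)ˣ,
      nrm (x1 : QA F[X] (C y) X) = 1 ∧ nrm (x2 : QA F[X] (C y) X) = 1 ∧
      sh (evm 0 (x1 : QA F[X] (C y) X)) ∧ sh (evm 0 (x2 : QA F[X] (C y) X)) ∧
      (a' : QA F[X] (C y) X) = gA ∧ (b' : QA F[X] (C y) X) = gB ∧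
      a' ∈ Subgroup.closure {x1, x2, -1} ∧ b' ∈ Subgroup.closure {x1, x2, -1} ∧
      (∃ M1 : SL2 F, (M1 : PSL2 F) = θ g1 ∧ M1.1 = mt A.1 B.1 hA hB hBA (evm s x1)) ∧
      (∃ M2 : SL2 F, (M2 : PSL2 F) = θ g2 ∧ M2.1 = mt A.1 B.1 hA hB hBA (evm s x2)) := by
  let a' : (QA F[X] (C y) X)ˣ := ⟨gA, -gA, by ext1 <;> simp [gA], by ext1 <;> simp [gA]⟩
  let b' : (QA F[X] (C y) X)ˣ := ⟨gB, sc (C y) - gB, by ext1 <;> simp [gB], by ext1 <;> simp [gB]⟩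
  let Z := Subgroup.zpowers (-1 : (QA F[X] (C y) X)ˣ)
  haveI : Z.Normal := pm_normal
  have mA : A.1 = mt A.1 B.1 hA hB hBA (evm s (a' : QA F[X] (C y) X)) := by simp [mt, a', gA]
  have mB : B.1 = mt A.1 B.1 hA hB hBA (evm s (b' : QA F[X] (C y) X)) := by simp [mt, b', gB]
  have hneg : ((-1 : (QA F[X] (C y) X)ˣ) : (QA F[X] (C y) X)ˣ ⧸ Z) = 1 :=
    (QuotientGroup.eq_one_iff _).mpr (Subgroup.mem_zpowers _)
  have ha2 : ((a' : (QA F[X] (C y) X)ˣ) : (QA F[X] (C y) X)ˣ ⧸ Z) ^ 2 = 1 := by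
    have : a' * a' = -1 := by
      apply Units.ext; show (gA : QA F[X] (C y) X) * gA = -1
      ext1 <;> simp [gA]
    rw [pow_two, ← QuotientGroup.mk_mul, this, hneg]
  have hbm : ((b' : (QA F[X] (C y) X)ˣ) : (QA F[X] (C y) X)ˣ ⧸ Z) ^ m = 1 := by
    obtain ⟨r, k, hrk⟩ := gB_pow (y := y) m
    have h1 : (B ^ m).1 = r • 1 + k • B.1 := by
      have : (B ^ m).1 = mt A.1 B.1 hA hB hBA (evm s ((b' : QA F[X] (C y) X) ^ m)) := by
        rw [map_pow, map_pow, ← mB]; exact Matrix.SpecialLinearGroup.coe_pow _ _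
      rw [this]
      show mt A.1 B.1 hA hB hBA (evm s ((gB : QA F[X] (C y) X) ^ m)) = _
      rw [hrk]; simp [mt]
    have h2 : ((B ^ m : SL2 F) : PSL2 F) = ((1 : SL2 F) : PSL2 F) := hBm
    have key : ∀ e : F, (B ^ m).1 = e • 1 → k = 0 ∧ r = e := by
      intro e he
      rw [h1] at he
      have hk : k = 0 := by
        by_contra hk
        apply hBs
        apply scal_one B (k⁻¹ * (e - r))
        rw [mul_smul, sub_smul, ← he, add_sub_cancel_left, smul_smul, inv_mul_cancel₀ hk, one_smul]
      refine ⟨hk, ?_⟩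
      rw [hk] at he
      have := congrFun (congrFun he 0) 0
      simpa using this
    have h3 : b' ^ m = 1 ∨ b' ^ m = -1 := by
      rcases psl_eq _ _ h2 with h | h
      · left
        obtain ⟨hk, hr⟩ := key 1 (by rw [h, one_smul]; rfl)
        apply Units.ext
        rw [Units.val_pow_eq_pow_val]
        show (gB : QA F[X] (C y) X) ^ m = 1
        rw [hrk, hk, hr]; ext1 <;> simp
      · right
        obtain ⟨hk, hr⟩ := key (-1) (by rw [h, neg_one_smul]; rfl)
        apply Units.ext
        rw [Units.val_pow_eq_pow_val]
        show (gB : QA F[X] (C y) X) ^ m = -1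
        rw [hrk, hk, hr]; ext1 <;> simp
    rw [← QuotientGroup.mk_pow]
    rcases h3 with h | h
    · rw [h]; rfl
    · rw [h, hneg]
  obtain ⟨f, hf⟩ := cyc_hom 2 _ ha2
  obtain ⟨f', hf'⟩ := cyc_hom m _ hbm
  let φ : Monoid.Coprod (Cyc 2) (Cyc m) →* (QA F[X] (C y) X)ˣ ⧸ Z := Monoid.Coprod.lift f f'
  have hφa : φ (inl (ofAdd 1)) = (a' : (QA F[X] (C y) X)ˣ ⧸ Z) := by
    simp only [φ, lift_apply_inl]; exact hf
  have hφb : φ (inr (ofAdd 1)) = (b' : (QA F[X] (C y) X)ˣ ⧸ Z) := by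
    simp only [φ, lift_apply_inr]; exact hf'
  have main : ∀ g, ∃ x : (QA F[X] (C y) X)ˣ, (x : (QA F[X] (C y) X)ˣ ⧸ Z) = φ g ∧ nrm (x : QA F[X] (C y) X) = 1 ∧ sh (evm 0 (x : QA F[X] (C y) X)) ∧
      ∃ M : SL2 F, (M : PSL2 F) = θ g ∧ M.1 = mt A.1 B.1 hA hB hBA (evm s (x : QA F[X] (C y) X)) := by
    intro g
    have hgm : g ∈ Subgroup.closure
      {(inl (ofAdd 1) : Monoid.Coprod (Cyc 2) (Cyc m)), inr (ofAdd 1)} := by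
      rw [cop_gen]; trivial
    induction hgm using Subgroup.closure_induction with
    | mem x hx =>
      rcases hx with rfl | rfl
      · exact ⟨a', hφa.symm, by simp [a', gA, nrm], by simp [sh, a', gA], A, hθA.symm, mA⟩
      · exact ⟨b', hφb.symm, by simp [b', gB, nrm], by simp [sh, b', gB], B, hθB.symm, mB⟩
    | one => exact ⟨1, by rw [map_one]; rfl, nrm_one, by simp [sh], 1, by rw [map_one]; rfl, by simp⟩
    | mul g h _ _ ihg ihh =>
      obtain ⟨x, hx, nx, sx, M, hM, mx⟩ := ihg
      obtain ⟨z, hz, nz, sz, N, hN, mz⟩ := ihh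
      refine ⟨x * z, by rw [map_mul, ← hx, ← hz]; rfl, by rw [Units.val_mul, nrm_mul, nx, nz, one_mul],
        ?_, M * N, by rw [map_mul, ← hM, ← hN]; rfl, ?_⟩
      · rw [Units.val_mul, map_mul]; exact sh_mul _ _ sx sz
      · rw [Units.val_mul, map_mul, map_mul, ← mx, ← mz]; rfl
    | inv g _ ihg =>
      obtain ⟨x, hx, nx, sx, M, hM, mx⟩ := ihg
      refine ⟨x⁻¹, by rw [map_inv, ← hx]; rfl, ?_, ?_, M⁻¹, by rw [map_inv, ← hM]; rfl, ?_⟩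
      · have := nrm_mul (x : QA F[X] (C y) X) ((x⁻¹ : (QA F[X] (C y) X)ˣ) : QA F[X] (C y) X)
        rw [Units.mul_inv, nrm_one, nx, one_mul] at this
        exact this.symm
      · rw [inv_eq x nx, map_sub, evm_sc, ← evm_tr]; exact sh_conj _ sx
      · have e1 : (M⁻¹).1 * M.1 = 1 := by
          rw [← Matrix.SpecialLinearGroup.coe_mul, inv_mul_cancel]; rfl
        have e2 : M.1 * mt A.1 B.1 hA hB hBA (evm s ((x⁻¹ : (QA F[X] (C y) X)ˣ) : QA F[X] (C y) X)) = 1 := by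
          rw [mx, ← map_mul, ← map_mul, Units.mul_inv, map_one, map_one]
        exact left_inv_eq_right_inv e1 e2
  obtain ⟨x1, hx1, n1, s1, hM1⟩ := main g1
  obtain ⟨x2, hx2, n2, s2, hM2⟩ := main g2
  have gen : ∀ g, ∃ x ∈ Subgroup.closure {x1, x2, -1}, (x : (QA F[X] (C y) X)ˣ ⧸ Z) = φ g := by
    intro g
    have hgm : g ∈ Subgroup.closure {g1, g2} := by rw [hg]; trivial
    induction hgm using Subgroup.closure_induction with
    | mem x hx =>
      rcases hx with rfl | rfl
      · exact ⟨x1, Subgroup.subset_closure (by simp), hx1⟩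
      · exact ⟨x2, Subgroup.subset_closure (by simp), hx2⟩
    | one => exact ⟨1, Subgroup.one_mem _, by rw [map_one]; rfl⟩
    | mul g h _ _ ihg ihh =>
      obtain ⟨x, hx, ex⟩ := ihg
      obtain ⟨z, hz, ez⟩ := ihh
      exact ⟨x * z, Subgroup.mul_mem _ hx hz, by rw [map_mul, ← ex, ← ez]; rfl⟩
    | inv g _ ihg =>
      obtain ⟨x, hx, ex⟩ := ihg
      exact ⟨x⁻¹, Subgroup.inv_mem _ hx, by rw [map_inv, ← ex]; rfl⟩
  have gen2 : ∀ g (u : (QA F[X] (C y) X)ˣ), φ g = (u : (QA F[X] (C y) X)ˣ ⧸ Z) → u ∈ Subgroup.closure {x1, x2, -1} := by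
    intro g u hu
    obtain ⟨x, hx, ex⟩ := gen g
    rw [hu, QuotientGroup.eq] at ex
    have : u = x * (x⁻¹ * u) := by group
    rw [this]
    apply Subgroup.mul_mem _ hx
    rcases mem_pm _ ex with h | h
    · rw [h]; exact Subgroup.one_mem _
    · rw [h]; exact Subgroup.subset_closure (by simp)
  exact ⟨x1, x2, a', b', n1, n2, s1, s2, rfl, rfl, gen2 _ _ hφa, gen2 _ _ hφb, hM1, hM2⟩

end QA

open Multiplicative Monoid.Coprod in
theorem no_lift {F : Type} [Field F] [Fintype F] (hF : Fintype.card F % 4 = 3) (m : ℕ)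
    (M1 M2 : SL2 F) (t1 : M1 0 0 + M1 1 1 ≠ 0) (t2 : M2 0 0 + M2 1 1 ≠ 0)
    (hw : (M1.1 * M2.1 - M2.1 * M1.1) * (M1.1 * M2.1 - M2.1 * M1.1) = (-4 : F) • 1)
    (θ : Monoid.Coprod (Cyc 2) (Cyc m) →* PSL2 F)
    (g1 g2 : Monoid.Coprod (Cyc 2) (Cyc m)) (hg : Subgroup.closure {g1, g2} = ⊤)
    (h1 : θ g1 = M1) (h2 : θ g2 = M2) : False := by
  have two := two_ne hF
  have four : (-4 : F) ≠ 0 := by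
    have : (-4 : F) = -(2 * 2) := by norm_num
    rw [this]; exact neg_ne_zero.mpr (mul_ne_zero two two)
  have notcomm : ¬ Commute (θ (inl (ofAdd 1))) (θ (inr (ofAdd 1))) := by
    intro hc
    have hle : ∀ g, Commute (θ g) (θ (inl (ofAdd 1))) ∧ Commute (θ g) (θ (inr (ofAdd 1))) := by
      intro g
      have hgm : g ∈ Subgroup.closure
        {(inl (ofAdd 1) : Monoid.Coprod (Cyc 2) (Cyc m)), inr (ofAdd 1)} := by
        rw [cop_gen]; trivial
      induction hgm using Subgroup.closure_induction with
      | mem x hx =>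
        rcases hx with rfl | rfl
        · exact ⟨Commute.refl _, hc⟩
        · exact ⟨hc.symm, Commute.refl _⟩
      | one => simp
      | mul g h _ _ ihg ihh =>
        rw [map_mul]; exact ⟨ihg.1.mul_left ihh.1, ihg.2.mul_left ihh.2⟩
      | inv g _ ihg => rw [map_inv]; exact ⟨ihg.1.inv_left, ihg.2.inv_left⟩
    have hall : ∀ g h, Commute (θ g) (θ h) := by
      intro g h
      have hgm : h ∈ Subgroup.closure
        {(inl (ofAdd 1) : Monoid.Coprod (Cyc 2) (Cyc m)), inr (ofAdd 1)} := by
        rw [cop_gen]; trivial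
      induction hgm using Subgroup.closure_induction with
      | mem x hx =>
        rcases hx with rfl | rfl
        · exact (hle g).1
        · exact (hle g).2
      | one => simp
      | mul g h _ _ ihg ihh => rw [map_mul]; exact ihg.mul_right ihh
      | inv g _ ihg => rw [map_inv]; exact ihg.inv_right
    have hc2 := hall g1 g2
    rw [h1, h2] at hc2
    have e : ((M1 * M2 : SL2 F) : PSL2 F) = ((M2 * M1 : SL2 F) : PSL2 F) := hc2
    rcases psl_eq _ _ e with h | h
    · have h' : M1.1 * M2.1 = M2.1 * M1.1 := by
        rw [← Matrix.SpecialLinearGroup.coe_mul, h]; rfl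
      rw [h', sub_self, mul_zero] at hw
      have := congrFun (congrFun hw 0) 0
      simp at this
      exact four (by rw [this, neg_zero])
    · have h' : M1 = -(M2 * M1 * M2⁻¹) := by
        rw [← neg_mul, ← h]; group
      have a := congrArg (fun X : SL2 F => X 0 0 + X 1 1) h'
      simp only [Matrix.SpecialLinearGroup.coe_neg, Matrix.neg_apply] at a
      simp only [slm, sli00, sli01, sli10, sli11] at a
      have hd := M2.2
      rw [Matrix.det_fin_two] at hd
      apply t1
      have : 2 * (M1 0 0 + M1 1 1) = 0 := by
        linear_combination a - (M1 0 0 + M1 1 1) * hd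
      exact (mul_eq_zero.mp this).resolve_left two
  obtain ⟨A, hA⟩ := QuotientGroup.mk_surjective (θ (inl (ofAdd 1)))
  obtain ⟨B, hB⟩ := QuotientGroup.mk_surjective (θ (inr (ofAdd 1)))
  have hA1 : (A : PSL2 F) ≠ 1 := by
    intro h; apply notcomm; rw [← hA, h]; exact Commute.one_left _
  have hB1 : (B : PSL2 F) ≠ 1 := by
    intro h; apply notcomm; rw [← hB, h]; exact Commute.one_right _
  have hA2 : (A : PSL2 F) ^ 2 = 1 := by
    rw [hA, ← map_pow, ← map_pow, ← ofAdd_nsmul]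
    have : (2 • (1 : ZMod 2)) = 0 := by decide
    rw [this, ofAdd_zero, map_one, map_one]
  have hBm : (B : PSL2 F) ^ m = 1 := by
    rw [hB, ← map_pow, ← map_pow, ← ofAdd_nsmul]
    have : (m • (1 : ZMod m)) = 0 := by simp
    rw [this, ofAdd_zero, map_one, map_one]
  obtain ⟨hAA, hAt⟩ := invol A hA1 hA2
  obtain ⟨x1, x2, a', b', n1, n2, s1, s2, ha, hb, hac, hbc, ⟨N1, hN1, e1⟩, ⟨N2, hN2, e2⟩⟩ :=
    QA.lift_ex m A B hAA (cayley B) (rel_BA A B hAt) hB1 hBm θ hA.symm hB.symm g1 g2 hg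
  have c1 : N1 = M1 ∨ N1 = -M1 := psl_eq _ _ (by rw [hN1, h1])
  have c2 : N2 = M2 ∨ N2 = -M2 := psl_eq _ _ (by rw [hN2, h2])
  have tn : ∀ N M : SL2 F, M 0 0 + M 1 1 ≠ 0 → (N = M ∨ N = -M) → N 0 0 + N 1 1 ≠ 0 := by
    rintro N M ht (rfl | rfl)
    · exact ht
    · simp only [Matrix.SpecialLinearGroup.coe_neg, Matrix.neg_apply]
      intro h; apply ht; linear_combination -h
  refine QA.core hF A.1 B.1 hAA (cayley B) (rel_BA A B hAt) x1 x2 a' b' n1 n2 s1 s2 ha hb hac hbc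
    N1 N2 e1 e2 (tn _ _ t1 c1) (tn _ _ t2 c2) ?_
  rw [← hw]
  rcases c1 with rfl | rfl <;> rcases c2 with rfl | rfl <;>
    simp only [Matrix.SpecialLinearGroup.coe_neg] <;> noncomm_ring

/-- if `q ≡ 3 (mod 4)`, `q ≠ 3`, and `PSL(2,q)` is `(2,m)`-generated,
then with `G = C_2 ∗ C_m`, `H = PSL(2,q)` is a homomorphic image of `G` and some
generating pair of `H` does not lift to a generating pair of `G` along any
homomorphism `G → H`. -/
theorem stmt11 (q m : ℕ) (hm : 0 < m)
    (F : Type) [Field F] [Fintype F] (hcard : Fintype.card F = q)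
    (hq3mod4 : q % 4 = 3) (hq3 : q ≠ 3)
    (hgen : ∃ h1 h2 : PSL2 F, Subgroup.closure {h1, h2} = ⊤ ∧ h1 ^ 2 = 1 ∧ h2 ^ m = 1) :
    (∃ φ : Monoid.Coprod (Cyc 2) (Cyc m) →* PSL2 F, Function.Surjective φ) ∧
    ∃ h1 h2 : PSL2 F, Subgroup.closure {h1, h2} = ⊤ ∧
      ∀ (θ : Monoid.Coprod (Cyc 2) (Cyc m) →* PSL2 F)
        (g1 g2 : Monoid.Coprod (Cyc 2) (Cyc m)),
        Subgroup.closure {g1, g2} = ⊤ → (θ g1, θ g2) ≠ (h1, h2) := by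
  subst hcard
  constructor
  · obtain ⟨h1, h2, hc, e1, e2⟩ := hgen
    obtain ⟨f, hf⟩ := cyc_hom 2 h1 e1
    obtain ⟨f', hf'⟩ := cyc_hom m h2 e2
    refine ⟨Monoid.Coprod.lift f f', ?_⟩
    rw [← MonoidHom.range_eq_top, eq_top_iff, ← hc, Subgroup.closure_le]
    rintro x (rfl | rfl)
    · exact ⟨Monoid.Coprod.inl (Multiplicative.ofAdd 1), by rw [Monoid.Coprod.lift_apply_inl, hf]⟩
    · exact ⟨Monoid.Coprod.inr (Multiplicative.ofAdd 1), by rw [Monoid.Coprod.lift_apply_inr, hf']⟩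
  · obtain ⟨M1, M2, hc, t1, t2, hw⟩ := gen_pair hq3mod4 hq3
    refine ⟨M1, M2, hc, ?_⟩
    intro θ g1 g2 hg h
    rw [Prod.mk.injEq] at h
    exact no_lift hq3mod4 m M1 M2 t1 t2 hw θ g1 g2 hg h.1 h.2
end

section
/- If A, B ∈ SL(2,F_5) generate SL(2,F_5) (i.e. ⟨A,B⟩ = SL(2,F_5)) and A³, B³ ∈ {I, −I}, then tr([A,B]) ≠ −2. -/
instance : Fact (Nat.Prime 5) := ⟨by norm_num⟩

theorem aux_cube (p q r s e : ZMod 5) (h1 : p * s - q * r = 1)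
    (h00 : (p * p + q * r) * p + (p * q + q * s) * r = e)
    (h01 : (p * p + q * r) * q + (p * q + q * s) * s = 0)
    (h10 : (r * p + s * r) * p + (r * q + s * s) * r = 0)
    (h11 : (r * p + s * r) * q + (r * q + s * s) * s = e) :
    (p + s) ^ 2 = 1 ∨ (q = 0 ∧ r = 0 ∧ p = s) := by
  by_cases h : (p + s) ^ 2 = 1
  · exact Or.inl h
  · right
    have h' : (p + s) ^ 2 - 1 ≠ 0 := sub_ne_zero.mpr h
    refine ⟨?_, ?_, ?_⟩
    · apply (mul_eq_zero.mp (?_ : ((p + s) ^ 2 - 1) * q = 0)).resolve_left h'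
      linear_combination h01 + q * h1
    · apply (mul_eq_zero.mp (?_ : ((p + s) ^ 2 - 1) * r = 0)).resolve_left h'
      linear_combination h10 + r * h1
    · apply sub_eq_zero.mp
      apply (mul_eq_zero.mp (?_ : ((p + s) ^ 2 - 1) * (p - s) = 0)).resolve_left h'
      linear_combination h00 - h11 + (p - s) * h1

theorem aux_matrix (A : SL2 (ZMod 5))
    (hA : ((A ^ 3 : SL2 (ZMod 5)) : Matrix (Fin 2) (Fin 2) (ZMod 5)) = 1 ∨
          ((A ^ 3 : SL2 (ZMod 5)) : Matrix (Fin 2) (Fin 2) (ZMod 5)) = -1) :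
    (A.1 0 0 + A.1 1 1) ^ 2 = 1 ∨ (A.1 0 1 = 0 ∧ A.1 1 0 = 0 ∧ A.1 0 0 = A.1 1 1) := by
  have hd := A.2
  rw [Matrix.det_fin_two] at hd
  have key : ∀ e : ZMod 5, (A.1 * A.1 * A.1) = e • (1 : Matrix (Fin 2) (Fin 2) (ZMod 5)) →
      (A.1 0 0 + A.1 1 1) ^ 2 = 1 ∨ (A.1 0 1 = 0 ∧ A.1 1 0 = 0 ∧ A.1 0 0 = A.1 1 1) := by
    intro e h
    have h00 := congrFun (congrFun h 0) 0
    have h01 := congrFun (congrFun h 0) 1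
    have h10 := congrFun (congrFun h 1) 0
    have h11 := congrFun (congrFun h 1) 1
    simp [Matrix.mul_apply, Fin.sum_univ_two] at h00 h01 h10 h11
    exact aux_cube _ _ _ _ e hd h00 h01 h10 h11
  rw [Matrix.SpecialLinearGroup.coe_pow, pow_three'] at hA
  rcases hA with h | h
  · exact key 1 (by rw [h, one_smul])
  · exact key (-1) (by rw [h, neg_smul, one_smul])

theorem aux_z : ∀ c z : ZMod 5, c ^ 2 = 1 → z ^ 2 - c * z ≠ -2 := by decide

/-- if `A, B` generate `SL(2,5)` and `A³, B³ ∈ {I, -I}`, then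
`tr([A,B]) ≠ -2`. -/
theorem stmt12 (A B : SL2 (ZMod 5))
    (hgen : Subgroup.closure {A, B} = ⊤)
    (hA : ((A ^ 3 : SL2 (ZMod 5)) : Matrix (Fin 2) (Fin 2) (ZMod 5)) = 1 ∨
          ((A ^ 3 : SL2 (ZMod 5)) : Matrix (Fin 2) (Fin 2) (ZMod 5)) = -1)
    (hB : ((B ^ 3 : SL2 (ZMod 5)) : Matrix (Fin 2) (Fin 2) (ZMod 5)) = 1 ∨
          ((B ^ 3 : SL2 (ZMod 5)) : Matrix (Fin 2) (Fin 2) (ZMod 5)) = -1) :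
    Matrix.trace ((A⁻¹ * B⁻¹ * A * B : SL2 (ZMod 5)) : Matrix (Fin 2) (Fin 2) (ZMod 5)) ≠ -2 := by
  have h1 := A.2
  have h2 := B.2
  have hA' := aux_matrix A hA
  have hB' := aux_matrix B hB
  rw [Matrix.det_fin_two] at h1 h2
  simp only [Matrix.SpecialLinearGroup.coe_mul, Matrix.SpecialLinearGroup.coe_inv,
    Matrix.adjugate_fin_two, Matrix.trace_fin_two, Matrix.mul_apply, Fin.sum_univ_two,
    Matrix.of_apply, Matrix.cons_val', Matrix.cons_val_zero, Matrix.cons_val_one,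
    Matrix.cons_val_fin_one]
  change A.1 0 0 * A.1 1 1 - A.1 0 1 * A.1 1 0 = 1 at h1
  change B.1 0 0 * B.1 1 1 - B.1 0 1 * B.1 1 0 = 1 at h2
  generalize A.1 0 0 = p at *
  generalize A.1 0 1 = q at *
  generalize A.1 1 0 = r at *
  generalize A.1 1 1 = s at *
  generalize B.1 0 0 = t at *
  generalize B.1 0 1 = u at *
  generalize B.1 1 0 = v at *
  generalize B.1 1 1 = w at *
  intro H
  have h5 : (2 : ZMod 5) ≠ -2 := by decide
  rcases hA' with ha | ⟨rfl, rfl, rfl⟩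
  · rcases hB' with hb | ⟨rfl, rfl, rfl⟩
    · refine aux_z ((p + s) * (t + w)) (p * t + q * v + r * u + s * w)
        (by rw [mul_pow, ha, hb, one_mul]) ?_
      grind
    · apply h5
      rw [← H]
      grind
  · apply h5
    rw [← H]
    grind
end

section
/- If A, B ∈ SL(2,F_7) generate SL(2,F_7) (i.e. ⟨A,B⟩ = SL(2,F_7)) and A³, B³ ∈ {I, −I}, then tr([A,B]) ∉ {3, −3}. -/
instance : Fact (Nat.Prime 7) := ⟨by norm_num⟩

theorem cube_aux (A : SL2 (ZMod 7))
    (hA : ((A ^ 3 : SL2 (ZMod 7)) : Matrix (Fin 2) (Fin 2) (ZMod 7)) = 1 ∨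
          ((A ^ 3 : SL2 (ZMod 7)) : Matrix (Fin 2) (Fin 2) (ZMod 7)) = -1) :
    (A.1 0 0 + A.1 1 1) ^ 2 = 1 ∨ (A.1 0 1 = 0 ∧ A.1 1 0 = 0 ∧ A.1 0 0 = A.1 1 1) := by
  have hd := A.2
  rw [Matrix.det_fin_two] at hd
  have h01 : (A.1 ^ 3) 0 1 = 0 := by
    rcases hA with h | h <;> rw [Matrix.SpecialLinearGroup.coe_pow] at h <;> simp [h]
  have h10 : (A.1 ^ 3) 1 0 = 0 := by
    rcases hA with h | h <;> rw [Matrix.SpecialLinearGroup.coe_pow] at h <;> simp [h]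
  have h00 : (A.1 ^ 3) 0 0 = (A.1 ^ 3) 1 1 := by
    rcases hA with h | h <;> rw [Matrix.SpecialLinearGroup.coe_pow] at h <;> simp [h]
  simp only [pow_succ, pow_zero, one_mul, Matrix.mul_apply, Fin.sum_univ_two] at h01 h10 h00
  generalize A.1 0 0 = a at *
  generalize A.1 0 1 = b at *
  generalize A.1 1 0 = c at *
  generalize A.1 1 1 = d at *
  by_cases hx : (a + d) ^ 2 = 1
  · exact Or.inl hx
  right
  have hx' : (a + d) ^ 2 - 1 ≠ 0 := sub_ne_zero.mpr hx
  refine ⟨?_, ?_, ?_⟩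
  · apply (mul_eq_zero.mp (?_ : ((a + d) ^ 2 - 1) * b = 0)).resolve_left hx'
    linear_combination h01 + b * hd
  · apply (mul_eq_zero.mp (?_ : ((a + d) ^ 2 - 1) * c = 0)).resolve_left hx'
    linear_combination h10 + c * hd
  · apply sub_eq_zero.mp
    apply (mul_eq_zero.mp (?_ : ((a + d) ^ 2 - 1) * (a - d) = 0)).resolve_left hx'
    linear_combination h00 + (a - d) * hd

theorem fin_aux : ∀ x y z : ZMod 7, x ^ 2 = 1 → y ^ 2 = 1 →
    ¬ (x ^ 2 + y ^ 2 + z ^ 2 - x * y * z - 2 = 3 ∨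
      x ^ 2 + y ^ 2 + z ^ 2 - x * y * z - 2 = -3) := by
  decide

theorem two_aux : ¬ ((2 : ZMod 7) = 3 ∨ (2 : ZMod 7) = -3) := by decide

/-- if `A, B` generate `SL(2,7)` and `A³, B³ ∈ {I, -I}`, then
`tr([A,B]) ∉ {3, -3}`. -/
theorem stmt13 (A B : SL2 (ZMod 7))
    (hgen : Subgroup.closure {A, B} = ⊤)
    (hA : ((A ^ 3 : SL2 (ZMod 7)) : Matrix (Fin 2) (Fin 2) (ZMod 7)) = 1 ∨
          ((A ^ 3 : SL2 (ZMod 7)) : Matrix (Fin 2) (Fin 2) (ZMod 7)) = -1)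
    (hB : ((B ^ 3 : SL2 (ZMod 7)) : Matrix (Fin 2) (Fin 2) (ZMod 7)) = 1 ∨
          ((B ^ 3 : SL2 (ZMod 7)) : Matrix (Fin 2) (Fin 2) (ZMod 7)) = -1) :
    Matrix.trace ((A⁻¹ * B⁻¹ * A * B : SL2 (ZMod 7)) : Matrix (Fin 2) (Fin 2) (ZMod 7)) ∉
      ({3, -3} : Set (ZMod 7)) := by
  have h1 := cube_aux A hA
  have h2 := cube_aux B hB
  clear hgen hA hB
  have hd := A.2
  have he := B.2
  rw [Matrix.det_fin_two] at hd he
  rw [Set.mem_insert_iff, Set.mem_singleton_iff]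
  simp only [Matrix.SpecialLinearGroup.coe_mul, Matrix.SpecialLinearGroup.coe_inv,
    Matrix.adjugate_fin_two, Matrix.trace_fin_two, Matrix.mul_apply, Fin.sum_univ_two,
    Matrix.of_apply, Matrix.cons_val', Matrix.cons_val_zero, Matrix.cons_val_one,
    Matrix.cons_val_fin_one]
  generalize A.1 0 0 = a at *
  generalize A.1 0 1 = b at *
  generalize A.1 1 0 = c at *
  generalize A.1 1 1 = d at *
  generalize B.1 0 0 = p at *
  generalize B.1 0 1 = q at *
  generalize B.1 1 0 = r at *
  generalize B.1 1 1 = s at *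
  rcases h1 with h1 | ⟨rfl, rfl, rfl⟩
  · rcases h2 with h2 | ⟨rfl, rfl, rfl⟩
    · have key := fin_aux (a + d) (p + s) (a * p + b * r + c * q + d * s) h1 h2
      convert key using 3 <;> grind
    · convert two_aux using 3 <;> grind
  · convert two_aux using 3 <;> grind
end

section
/- Let G = C_2 ∗ C_5 and H = PSL(2,5). Then for every generating pair (h1,h2) of H there exist a group homomorphism θ : G → H and a generating pair (g1,g2) of G with θ(g1) = h1 and θ(g2) = h2. -/
abbrev GG : Type := Monoid.Coprod (Cyc 2) (Cyc 5)

/-- the lifting property -/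
def Lifts (h1 h2 : PSL2 (ZMod 5)) : Prop :=
  Subgroup.closure {h1, h2} = ⊤ →
    ∃ (θ : GG →* PSL2 (ZMod 5)) (g1 g2 : GG),
      Subgroup.closure {g1, g2} = ⊤ ∧ θ g1 = h1 ∧ θ g2 = h2

theorem closure_swap {G : Type*} [Group G] (a b : G) :
    Subgroup.closure {a, b} = Subgroup.closure {b, a} := by
  rw [Set.pair_comm]

theorem closure_mul {G : Type*} [Group G] (a b : G) :
    Subgroup.closure {a, a * b} = Subgroup.closure {a, b} := by
  apply le_antisymm
  · rw [Subgroup.closure_le]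
    have ha : a ∈ Subgroup.closure {a, b} := Subgroup.subset_closure (by simp)
    have hb : b ∈ Subgroup.closure {a, b} := Subgroup.subset_closure (by simp)
    rintro x (rfl | rfl)
    · exact ha
    · exact mul_mem ha hb
  · rw [Subgroup.closure_le]
    have ha : a ∈ Subgroup.closure {a, a * b} := Subgroup.subset_closure (by simp)
    have hb : a * b ∈ Subgroup.closure {a, a * b} := Subgroup.subset_closure (by simp)
    rintro x (rfl | rfl)
    · exact ha
    · have := mul_mem (inv_mem ha) hb
      simpa using this

theorem Lifts.swap {a b : PSL2 (ZMod 5)} (h : Lifts b a) : Lifts a b := by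
  intro hg
  rw [closure_swap] at hg
  obtain ⟨θ, g1, g2, h0, h1, h2⟩ := h hg
  exact ⟨θ, g2, g1, by rw [closure_swap]; exact h0, h2, h1⟩

theorem Lifts.mul {a b : PSL2 (ZMod 5)} (h : Lifts a (a * b)) : Lifts a b := by
  intro hg
  rw [← closure_mul] at hg
  obtain ⟨θ, g1, g2, h0, h1, h2⟩ := h hg
  refine ⟨θ, g1, g1⁻¹ * g2, ?_, h1, ?_⟩
  · rw [← closure_mul]; simpa using h0
  · simp [h1, h2]

theorem exists_hom {H : Type*} [Group H] (n : ℕ) (x : H) (hx : x ^ n = 1) :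
    ∃ f : Cyc n →* H, f (Multiplicative.ofAdd 1) = x := by
  refine ⟨AddMonoidHom.toMultiplicativeLeft
    (ZMod.lift n ⟨zmultiplesHom (Additive H) (Additive.ofMul x), ?_⟩), ?_⟩
  · simp only [zmultiplesHom_apply, natCast_zsmul]
    rw [← ofMul_pow, hx]; rfl
  · have := ZMod.lift_coe n (A := Additive H)
      ⟨zmultiplesHom (Additive H) (Additive.ofMul x), by
        simp only [zmultiplesHom_apply, natCast_zsmul]
        rw [← ofMul_pow, hx]; rfl⟩ 1
    simp only [Int.cast_one] at this
    simp [this]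

theorem cyc_mem (n : ℕ) [NeZero n] {G : Type*} [Group G] (f : Cyc n →* G) (S : Subgroup G)
    (h : f (Multiplicative.ofAdd 1) ∈ S) : f.range ≤ S := by
  rintro _ ⟨x, rfl⟩
  have : x = (Multiplicative.ofAdd (1 : ZMod n)) ^ (Multiplicative.toAdd x).val := by
    rw [← ofAdd_nsmul]
    simp
  rw [this, map_pow]
  exact pow_mem h _

theorem lifts_base {a b : PSL2 (ZMod 5)} (ha : a ^ 2 = 1) (hb : b ^ 5 = 1) : Lifts a b := by
  intro _
  obtain ⟨f, hf⟩ := exists_hom 2 a ha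
  obtain ⟨g, hg⟩ := exists_hom 5 b hb
  refine ⟨Monoid.Coprod.lift f g, Monoid.Coprod.inl (Multiplicative.ofAdd 1),
    Monoid.Coprod.inr (Multiplicative.ofAdd 1), ?_, by simpa using hf, by simpa using hg⟩
  rw [eq_top_iff, ← Monoid.Coprod.range_inl_sup_range_inr]
  exact sup_le (cyc_mem 2 _ _ (Subgroup.subset_closure (by simp)))
    (cyc_mem 5 _ _ (Subgroup.subset_closure (by simp)))

/-! ### conjugation-stable sets -/

theorem stable_all {G : Type*} [Group G] {a b : G} (hg : Subgroup.closure {a, b} = ⊤)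
    (T : Finset G) (ha : ∀ t ∈ T, a * t * a⁻¹ ∈ T) (hb : ∀ t ∈ T, b * t * b⁻¹ ∈ T) (g : G) :
    ∀ t ∈ T, g * t * g⁻¹ ∈ T := by
  have key : ∀ x : G, (∀ t ∈ T, x * t * x⁻¹ ∈ T) → ∀ t ∈ T, x⁻¹ * t * x ∈ T := by
    intro x hx t ht
    have hinj : Set.InjOn (fun t => x * t * x⁻¹) (T : Set G) := by
      intro s _ s' _ h
      simpa using h
    obtain ⟨s, hs, hst⟩ := Finset.surjOn_of_injOn_of_card_le _ (fun t ht => hx t ht) hinj le_rfl ht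
    have : x⁻¹ * t * x = s := by
      rw [← hst]; group
    rw [this]; exact hs
  have hmem : g ∈ Subgroup.closure {a, b} := by rw [hg]; trivial
  induction hmem using Subgroup.closure_induction with
  | mem x hx =>
    rcases hx with rfl | rfl
    · exact ha
    · exact hb
  | one => simp
  | mul x y _ _ hx hy =>
    intro t ht
    have := hx _ (hy t ht)
    simpa [mul_assoc] using this
  | inv x _ hx =>
    intro t ht
    simpa using key x hx t ht

theorem comm_of_small {G : Type*} [Group G] (T : Finset G) (hT : T.card ≤ 3) (u c : G)
    (hu : u ^ 5 = 1) (h : ∀ g : G, g * c * g⁻¹ ∈ T) : u * c = c * u := by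
  obtain ⟨i, hi, j, hj, hij, he⟩ := Finset.exists_ne_map_eq_of_card_lt_of_maps_to
    (s := Finset.range 4) (t := T) (by simp; omega) (f := fun i => u ^ i * c * (u ^ i)⁻¹)
    (fun i _ => h _)
  wlog hlt : i < j generalizing i j
  · exact this j hj i hi hij.symm he.symm (by omega)
  obtain ⟨k, rfl⟩ := Nat.exists_eq_add_of_lt hlt
  simp only [Finset.mem_range] at hi hj
  have hc : Commute (u ^ (k + 1)) c := by
    have h1 : u ^ (i + k + 1) = u ^ i * u ^ (k + 1) := by rw [← pow_add]; congr 1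
    simp only [h1, mul_inv_rev] at he
    have h2 : c = u ^ (k + 1) * c * (u ^ (k + 1))⁻¹ := by
      have := congrArg (fun x => (u ^ i)⁻¹ * x * u ^ i) he
      simpa [mul_assoc] using this
    exact (eq_mul_inv_iff_mul_eq.mp h2).symm
  have hk : k < 3 := by omega
  have h6 : u ^ 6 = u := by rw [pow_succ, hu, one_mul]
  interval_cases k
  · simpa using hc.eq
  · have := (hc.pow_left 3).eq
    rw [← pow_mul] at this
    simpa [h6] using this
  · have := (hc.pow_left 2).eq
    rw [← pow_mul] at this
    simpa [h6] using this

/-! ### matrices -/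

abbrev SS : Type := SL2 (ZMod 5)

def mkP (A : SS) : PSL2 (ZMod 5) := QuotientGroup.mk A

theorem mkP_mul (A B : SS) : mkP (A * B) = mkP A * mkP B := rfl
theorem mkP_pow (A : SS) (n : ℕ) : mkP (A ^ n) = mkP A ^ n := rfl
theorem mkP_neg_one : mkP (-1) = 1 := by
  apply (QuotientGroup.eq_one_iff _).2
  rw [Subgroup.mem_center_iff]; intro g; simp
theorem mkP_neg (A : SS) : mkP (-A) = mkP A := by
  have : (-A) = (-1) * A := by simp
  rw [this, mkP_mul, mkP_neg_one, one_mul]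

theorem eq_iff_ent (A B : SS) : A = B ↔
    A 0 0 = B 0 0 ∧ A 0 1 = B 0 1 ∧ A 1 0 = B 1 0 ∧ A 1 1 = B 1 1 := by
  constructor
  · rintro rfl; simp
  · rintro ⟨h1, h2, h3, h4⟩
    ext i j
    fin_cases i <;> fin_cases j <;> assumption

theorem det_ent (A : SS) : A 0 0 * A 1 1 - A 0 1 * A 1 0 = 1 := by
  have := A.2
  rw [Matrix.det_fin_two] at this
  exact this

def UU : SS := ⟨!![1, 1; 0, 1], by decide⟩
def LL : SS := ⟨!![1, 0; 1, 1], by decide⟩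

theorem U5 : mkP UU ^ 5 = 1 := by
  rw [← mkP_pow]
  have : UU ^ 5 = 1 := by decide
  rw [this]; rfl
theorem L5 : mkP LL ^ 5 = 1 := by
  rw [← mkP_pow]
  have : LL ^ 5 = 1 := by decide
  rw [this]; rfl

theorem center_ent (A : SS) (h : A 0 1 = 0) (h' : A 1 0 = 0) (h2 : A 0 0 = A 1 1) :
    mkP A = 1 := by
  apply (QuotientGroup.eq_one_iff _).2
  rw [Subgroup.mem_center_iff]; intro g
  rw [eq_iff_ent]
  simp [Matrix.mul_apply, Fin.sum_univ_two, h, h', h2, mul_comm]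

theorem mkP_eq {A B : SS} (h : mkP A = mkP B) : ∃ r : ZMod 5, ∀ i j, A i j = r * B i j := by
  have h2 := QuotientGroup.eq.1 h.symm
  rw [Matrix.SpecialLinearGroup.mem_center_iff] at h2
  obtain ⟨r, -, hr⟩ := h2
  refine ⟨r, fun i j => ?_⟩
  have : A = B * (B⁻¹ * A) := by simp
  have h3 : (A : Matrix (Fin 2) (Fin 2) (ZMod 5)) = B.1 * (B⁻¹ * A).1 := by
    conv_lhs => rw [this]
    rfl
  rw [← hr] at h3
  have h4 := congrFun (congrFun h3 i) j
  simpa [mul_comm] using h4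

theorem dec1 : ∀ r a c d : ZMod 5, a + c = r * a → c = r * c → d = r * (c + d) →
    c = 0 ∧ (r = 1 ∨ (a = 0 ∧ d = 0)) := by decide

theorem one_of_comm (C : SS) (hU : mkP UU * mkP C = mkP C * mkP UU)
    (hL : mkP LL * mkP C = mkP C * mkP LL) : mkP C = 1 := by
  have hd := det_ent C
  obtain ⟨r, hr⟩ := mkP_eq (A := UU * C) (B := C * UU) hU
  obtain ⟨s, hs⟩ := mkP_eq (A := LL * C) (B := C * LL) hL
  have r00 := hr 0 0
  have r01 := hr 0 1
  have r10 := hr 1 0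
  have r11 := hr 1 1
  have s00 := hs 0 0
  have s01 := hs 0 1
  have s11 := hs 1 1
  simp only [Matrix.SpecialLinearGroup.coe_mul] at r00 r01 r10 r11 s00 s01 s11
  simp [UU, LL, Matrix.mul_apply, Fin.sum_univ_two] at r00 r01 r10 r11 s00 s01 s11
  obtain ⟨c0, h⟩ := dec1 r (C 0 0) (C 1 0) (C 1 1) (by grind) (by grind) (by grind)
  obtain ⟨b0, h'⟩ := dec1 s (C 1 1) (C 0 1) (C 0 0) (by grind) (by grind) (by grind)
  rcases h with rfl | ⟨h1, h2⟩
  · apply center_ent C b0 c0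
    rw [b0] at r01
    simpa using r01.symm
  · simp [h1, h2, b0] at hd

theorem one_of_stable {a b : PSL2 (ZMod 5)} (hg : Subgroup.closure {a, b} = ⊤)
    (T : Finset (PSL2 (ZMod 5))) (hT : T.card ≤ 3)
    (ha : ∀ t ∈ T, a * t * a⁻¹ ∈ T) (hb : ∀ t ∈ T, b * t * b⁻¹ ∈ T)
    (c : PSL2 (ZMod 5)) (hc : c ∈ T) : c = 1 := by
  have h : ∀ g, g * c * g⁻¹ ∈ T := fun g => stable_all hg T ha hb g c hc
  have h1 := comm_of_small T hT _ c U5 h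
  have h2 := comm_of_small T hT _ c L5 h
  obtain ⟨C, rfl⟩ := QuotientGroup.mk_surjective c
  exact one_of_comm C h1 h2

theorem lifts_comm {a b : PSL2 (ZMod 5)} (h : a * b = b * a) : Lifts a b := by
  intro hg
  have ha : a = 1 := one_of_stable hg {a} (by simp) (by simp) (by simp [← h]) a (by simp)
  have hb : b = 1 := one_of_stable hg {b} (by simp) (by simp [h]) (by simp) b (by simp)
  exact lifts_base (by simp [ha]) (by simp [hb]) hg

open Classical in
theorem lifts_dihedral {a b : PSL2 (ZMod 5)} (ha : a ^ 2 = 1) (hb : b ^ 2 = 1) : Lifts a b := by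
  intro hg
  have ha' : a⁻¹ = a := by rw [inv_eq_iff_mul_eq_one, ← sq, ha]
  have hb' : b⁻¹ = b := by rw [inv_eq_iff_mul_eq_one, ← sq, hb]
  have ha2 : a * a = 1 := by rw [← sq, ha]
  have hb2 : b * b = 1 := by rw [← sq, hb]
  have h1 := one_of_stable hg {a * b, b * a} (Finset.card_le_two.trans (by norm_num))
    (by
      intro t ht
      simp only [Finset.mem_insert, Finset.mem_singleton] at ht ⊢
      rcases ht with rfl | rfl
      · right; rw [ha', ← mul_assoc, ha2, one_mul]
      · left; rw [ha', mul_assoc, mul_assoc, ha2, mul_one])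
    (by
      intro t ht
      simp only [Finset.mem_insert, Finset.mem_singleton] at ht ⊢
      rcases ht with rfl | rfl
      · right; rw [hb', mul_assoc, mul_assoc, hb2, mul_one]
      · left; rw [hb', ← mul_assoc, hb2, one_mul]) (a * b) (by simp)
  have : b = a := by rw [← ha', eq_inv_iff_mul_eq_one, ← ha', ← hb', ← mul_inv_rev, h1, inv_one]
  exact lifts_comm (by rw [this]) hg

theorem a4_rel {G : Type*} [Group G] {a b : G} (ha : a ^ 2 = 1) (hb : b ^ 3 = 1)
    (hab : (a * b) ^ 3 = 1) : a * (b * a * b⁻¹) * a⁻¹ = b * a * b⁻¹ ∧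
      a * (b⁻¹ * a * b) * a⁻¹ = b⁻¹ * a * b := by
  have ha' : a⁻¹ = a := by rw [inv_eq_iff_mul_eq_one, ← sq, ha]
  have hbb : b⁻¹ = b * b := by rw [inv_eq_iff_mul_eq_one, ← mul_assoc, ← hb]; simp [pow_succ]
  have hbb' : b * b * b = 1 := by rw [← hb]; simp [pow_succ]
  have e : a * b * a * b * a * b = 1 := by rw [← hab]; simp [pow_succ, mul_assoc]
  -- b a b = a b⁻¹ a
  have e1 : b * a * b = a * b⁻¹ * a := by
    have : b * a * b = a⁻¹ * (a * b * a * b * a * b) * b⁻¹ * a⁻¹ := by group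
    rw [this, e, ha', mul_one]
  have e2 : b⁻¹ * a * b⁻¹ = a * b * a := by
    have := congrArg (·⁻¹) e1
    simp only [mul_inv_rev, inv_inv, ha'] at this
    simpa [mul_assoc] using this
  have hbi : b⁻¹ * b⁻¹ = b := by rw [← mul_inv_rev, ← hbb, inv_inv]
  have aa : a * a = 1 := by rw [← sq, ha]
  constructor
  · calc a * (b * a * b⁻¹) * a⁻¹ = (a * b * a) * b⁻¹ * a := by rw [ha']; group
      _ = b⁻¹ * a * (b⁻¹ * b⁻¹) * a := by rw [← e2]; group
      _ = b⁻¹ * a * b * a := by rw [hbi]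
      _ = b * (b * a * b) * a := by simp only [hbb, mul_assoc]
      _ = b * a * b⁻¹ * (a * a) := by
        rw [e1, aa, mul_one]
        calc b * (a * b⁻¹ * a) * a = b * a * b⁻¹ * (a * a) := by group
          _ = _ := by rw [aa, mul_one]
      _ = b * a * b⁻¹ := by rw [aa, mul_one]
  · calc a * (b⁻¹ * a * b) * a⁻¹ = (a * b⁻¹ * a) * b * a := by rw [ha']; group
      _ = b * a * (b * b) * a := by rw [← e1]; group
      _ = b * a * b⁻¹ * a := by rw [← hbb]
      _ = (b⁻¹ * b⁻¹) * a * b⁻¹ * a := by rw [hbi]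
      _ = b⁻¹ * (b⁻¹ * a * b⁻¹) * a := by group
      _ = b⁻¹ * a * b * (a * a) := by rw [e2]; group
      _ = b⁻¹ * a * b := by rw [aa, mul_one]

open Classical in
theorem lifts_a4 {a b : PSL2 (ZMod 5)} (ha : a ^ 2 = 1) (hb : b ^ 3 = 1)
    (hab : (a * b) ^ 3 = 1) : Lifts a b := by
  intro hg
  obtain ⟨r1, r2⟩ := a4_rel ha hb hab
  have hbb : b⁻¹ = b * b := by rw [inv_eq_iff_mul_eq_one, ← mul_assoc, ← hb]; simp [pow_succ]
  have hbi : b⁻¹ * b⁻¹ = b := by rw [← mul_inv_rev, ← hbb, inv_inv]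
  have h1 := one_of_stable hg {a, b * a * b⁻¹, b⁻¹ * a * b} Finset.card_le_three
    (by
      intro t ht
      simp only [Finset.mem_insert, Finset.mem_singleton] at ht ⊢
      rcases ht with rfl | rfl | rfl
      · left; group
      · right; left; exact r1
      · right; right; exact r2)
    (by
      intro t ht
      simp only [Finset.mem_insert, Finset.mem_singleton] at ht ⊢
      rcases ht with rfl | rfl | rfl
      · right; left; rfl
      · right; right
        calc b * (b * a * b⁻¹) * b⁻¹ = (b * b) * a * (b⁻¹ * b⁻¹) := by group
          _ = _ := by rw [hbi, ← hbb]
      · left; group) a (by simp)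
  exact lifts_comm (by rw [h1]; simp) hg

def trc (A : SS) : ZMod 5 := A 0 0 + A 1 1

theorem pow2 {A : SS} (h : trc A = 0) : mkP A ^ 2 = 1 := by
  rw [← mkP_pow, ← mkP_neg_one]
  congr 1
  have hd := det_ent A
  unfold trc at h
  rw [eq_iff_ent]
  simp [pow_succ, Matrix.mul_apply, Fin.sum_univ_two]
  refine ⟨?_, ?_, ?_, ?_⟩ <;> grind

theorem pow3 {A : SS} (h : trc A = 1) : mkP A ^ 3 = 1 := by
  rw [← mkP_pow, ← mkP_neg_one]
  congr 1
  have hd := det_ent A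
  unfold trc at h
  rw [eq_iff_ent]
  simp [pow_succ, Matrix.mul_apply, Fin.sum_univ_two]
  refine ⟨?_, ?_, ?_, ?_⟩ <;> grind

theorem pow5 {A : SS} (h : trc A = 2) : mkP A ^ 5 = 1 := by
  rw [← mkP_pow]
  have : A ^ 5 = 1 := by
    have hd := det_ent A
    unfold trc at h
    generalize ha : A 0 0 = a at *
    generalize hb : A 0 1 = b at *
    generalize hc : A 1 0 = c at *
    generalize he : A 1 1 = e at *
    have e2 : e = 2 - a := by linear_combination h
    subst e2
    have hbc : b * c = 2 * a - a ^ 2 - 1 := by linear_combination -hd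
    rw [eq_iff_ent]
    simp [pow_succ, Matrix.mul_apply, Fin.sum_univ_two, ha, hb, hc, he]
    refine ⟨?_, ?_, ?_, ?_⟩ <;> grind
  rw [this]; rfl

theorem dec211 : ∀ p q r : ZMod 5, p * p + q * r = 0 → ∀ s t v : ZMod 5,
    s * (1 - s) - t * v = 1 → p * s + q * v + r * t - p * (1 - s) = 0 →
      p = 0 ∧ q = 0 ∧ r = 0 := by decide +kernel

theorem dec222 : ∀ p q r : ZMod 5, p * p + q * r = 0 → ∀ s t v : ZMod 5,
    s * s + t * v = 0 → 2 * p * s + q * v + r * t = 0 →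
      p * t = q * s ∧ p * v = r * s ∧ q * v = r * t := by decide +kernel

theorem comm211 {A B : SS} (hA : trc A = 2) (hB : trc B = 1) (hC : trc (A * B) = 1) :
    A * B = B * A := by
  have dA := det_ent A
  have dB := det_ent B
  simp only [trc, Matrix.SpecialLinearGroup.coe_mul, Matrix.mul_apply, Fin.sum_univ_two]
    at hA hB hC
  have eA : A 1 1 = 2 - A 0 0 := by linear_combination hA
  have eB : B 1 1 = 1 - B 0 0 := by linear_combination hB
  rw [eA] at dA hC
  rw [eB] at dB hC
  obtain ⟨h1, h2, h3⟩ := dec211 (A 0 0 - 1) (A 0 1) (A 1 0) (by linear_combination -dA)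
    (B 0 0) (B 0 1) (B 1 0) (by linear_combination dB) (by linear_combination hC)
  have : A = 1 := by
    rw [eq_iff_ent]
    have h4 : A 0 0 = 1 := by linear_combination h1
    have h5 : A 1 1 = 1 := by linear_combination eA - h1
    simp [h2, h3, h4, h5]
  simp [this]

theorem comm222 {A B : SS} (hA : trc A = 2) (hB : trc B = 2) (hC : trc (A * B) = 2) :
    A * B = B * A := by
  have dA := det_ent A
  have dB := det_ent B
  simp only [trc, Matrix.SpecialLinearGroup.coe_mul, Matrix.mul_apply, Fin.sum_univ_two]
    at hA hB hC
  have eA : A 1 1 = 2 - A 0 0 := by linear_combination hA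
  have eB : B 1 1 = 2 - B 0 0 := by linear_combination hB
  rw [eA] at dA hC
  rw [eB] at dB hC
  obtain ⟨h1, h2, h3⟩ := dec222 (A 0 0 - 1) (A 0 1) (A 1 0) (by linear_combination -dA)
    (B 0 0 - 1) (B 0 1) (B 1 0) (by linear_combination -dB) (by linear_combination hC)
  rw [eq_iff_ent]
  simp only [Matrix.SpecialLinearGroup.coe_mul, Matrix.mul_apply, Fin.sum_univ_two, eA, eB]
  refine ⟨?_, ?_, ?_, ?_⟩
  · linear_combination h3
  · linear_combination 2 * h1
  · linear_combination -2 * h2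
  · linear_combination -h3

def LiT (t : ZMod 5 × ZMod 5 × ZMod 5) : Prop :=
  ∀ A B : SS, trc A = t.1 → trc B = t.2.1 → trc (A * B) = t.2.2 → Lifts (mkP A) (mkP B)

def baseT (t : ZMod 5 × ZMod 5 × ZMod 5) : Bool :=
  (t.1 == 0 && (t.2.1 == 2 || t.2.1 == 0 || (t.2.1 == 1 && t.2.2 == 1))) ||
    (t.1 == 2 && ((t.2.1 == 1 && t.2.2 == 1) || (t.2.1 == 2 && t.2.2 == 2)))

def reach : ℕ → ZMod 5 × ZMod 5 × ZMod 5 → Bool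
  | 0, t => baseT t
  | n + 1, t => baseT t || reach n (t.2.1, t.1, t.2.2) ||
      reach n (t.1, t.2.2, t.1 * t.2.2 - t.2.1) || reach n (-t.1, t.2.1, -t.2.2)

theorem LT_base (t) (h : baseT t = true) : LiT t := by
  obtain ⟨x, y, z⟩ := t
  intro A B hA hB hC
  simp only at hA hB hC
  simp only [baseT, Bool.or_eq_true, Bool.and_eq_true, beq_iff_eq] at h
  rcases h with ⟨rfl, (rfl | rfl) | ⟨rfl, rfl⟩⟩ | ⟨rfl, ⟨rfl, rfl⟩ | ⟨rfl, rfl⟩⟩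
  · exact lifts_base (pow2 hA) (pow5 hB)
  · exact lifts_dihedral (pow2 hA) (pow2 hB)
  · exact lifts_a4 (pow2 hA) (pow3 hB) (pow3 hC)
  · exact lifts_comm (congrArg mkP (comm211 hA hB hC))
  · exact lifts_comm (congrArg mkP (comm222 hA hB hC))

theorem trc_mul (A B : SS) : trc (A * (A * B)) = trc A * trc (A * B) - trc B := by
  have hd := det_ent A
  simp only [trc, Matrix.SpecialLinearGroup.coe_mul, Matrix.mul_apply, Fin.sum_univ_two]
  linear_combination -(B 0 0 + B 1 1) * hd

theorem LT_reach (n : ℕ) : ∀ t, reach n t = true → LiT t := by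
  induction n with
  | zero => exact LT_base
  | succ n ih =>
    intro t h
    simp only [reach, Bool.or_eq_true] at h
    rcases h with ((h | h) | h) | h
    · exact LT_base t h
    · intro A B hA hB hC
      refine (ih _ h B A hB hA ?_).swap
      rw [← hC]
      simp [trc, Matrix.mul_apply, Fin.sum_univ_two]
      ring
    · intro A B hA hB hC
      have ht : trc (A * (A * B)) = t.1 * t.2.2 - t.2.1 := by
        rw [← hC, ← hA, ← hB]
        exact trc_mul A B
      have := ih _ h A (A * B) hA hC ht
      rw [mkP_mul] at this
      exact this.mul
    · intro A B hA hB hC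
      have := ih _ h (-A) B (by simp [← hA, trc]; ring) hB
        (by simp [← hC, trc, Matrix.mul_apply, Fin.sum_univ_two]; ring)
      rwa [mkP_neg] at this

set_option maxRecDepth 100000 in
theorem reach_all : ∀ x y z : ZMod 5, reach 7 (x, y, z) = true := by decide +kernel

theorem stmt14 (h1 h2 : PSL2 (ZMod 5)) (hgen : Subgroup.closure {h1, h2} = ⊤) :
    ∃ (θ : Monoid.Coprod (Cyc 2) (Cyc 5) →* PSL2 (ZMod 5))
      (g1 g2 : Monoid.Coprod (Cyc 2) (Cyc 5)),
      Subgroup.closure {g1, g2} = ⊤ ∧ θ g1 = h1 ∧ θ g2 = h2 := by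
  obtain ⟨A, rfl⟩ := QuotientGroup.mk_surjective h1
  obtain ⟨B, rfl⟩ := QuotientGroup.mk_surjective h2
  exact LT_reach 7 _ (reach_all (trc A) (trc B) (trc (A * B))) A B rfl rfl rfl hgen
end

section
/- Let m, n be positive integers and G = C_m ∗ C_n, and let G' denote the derived subgroup of G. Then the abelianization of G' (i.e. G'/[G',G']) is a free abelian group of rank (m−1)(n−1); in particular it is isomorphic to ℤ^{(m−1)(n−1)}. -/
open scoped commutatorElement

open Monoid.Coprod in
theorem comm_le_closure {A B : Type} [CommGroup A] [CommGroup B] :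
    commutator (Monoid.Coprod A B) ≤ Subgroup.closure
      {x : Monoid.Coprod A B | ∃ (a : A) (b : B), x = ⁅(inl a : Monoid.Coprod A B), (inr b : Monoid.Coprod A B)⁆} := by
  set H := Subgroup.closure
      {x : Monoid.Coprod A B | ∃ (a : A) (b : B), x = ⁅(inl a : Monoid.Coprod A B), (inr b : Monoid.Coprod A B)⁆} with hH
  have hgen : ∀ (a : A) (b : B), ⁅(inl a : Monoid.Coprod A B), inr b⁆ ∈ H :=
    fun a b => Subgroup.subset_closure ⟨a, b, rfl⟩
  have hnorm : ∀ g : Monoid.Coprod A B, ∀ h ∈ H, g * h * g⁻¹ ∈ H := by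
    intro g
    induction g using Monoid.Coprod.induction_on with
    | inl c =>
      intro h hh
      induction hh using Subgroup.closure_induction with
      | mem x hx =>
        obtain ⟨a, b, rfl⟩ := hx
        have : (inl c : Monoid.Coprod A B) * ⁅(inl a : Monoid.Coprod A B), (inr b : Monoid.Coprod A B)⁆ * (inl c)⁻¹
            = ⁅(inl (c * a) : Monoid.Coprod A B), (inr b : Monoid.Coprod A B)⁆ * ⁅(inl c : Monoid.Coprod A B), (inr b : Monoid.Coprod A B)⁆⁻¹ := by
          simp only [commutatorElement_def, map_mul]; group
        rw [this]
        exact H.mul_mem (hgen _ _) (H.inv_mem (hgen _ _))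
      | one => simp
      | mul x y _ _ hx hy =>
        have := H.mul_mem hx hy
        simpa [mul_assoc] using this
      | inv x _ hx =>
        have := H.inv_mem hx
        simpa [mul_assoc] using this
    | inr d =>
      intro h hh
      induction hh using Subgroup.closure_induction with
      | mem x hx =>
        obtain ⟨a, b, rfl⟩ := hx
        have : (inr d : Monoid.Coprod A B) * ⁅(inl a : Monoid.Coprod A B), (inr b : Monoid.Coprod A B)⁆ * (inr d)⁻¹
            = ⁅(inl a : Monoid.Coprod A B), (inr d : Monoid.Coprod A B)⁆⁻¹ * ⁅(inl a : Monoid.Coprod A B), (inr (d * b) : Monoid.Coprod A B)⁆ := by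
          simp only [commutatorElement_def, map_mul]; group
        rw [this]
        exact H.mul_mem (H.inv_mem (hgen _ _)) (hgen _ _)
      | one => simp
      | mul x y _ _ hx hy =>
        have := H.mul_mem hx hy
        simpa [mul_assoc] using this
      | inv x _ hx =>
        have := H.inv_mem hx
        simpa [mul_assoc] using this
    | mul x y hx hy =>
      intro h hh
      have := hx _ (hy h hh)
      simpa [mul_assoc] using this
  have : H.Normal := ⟨fun h hh g => hnorm g h hh⟩
  let q := QuotientGroup.mk' H
  have hcomm : ∀ a b, Commute ((q.comp inl) a) ((q.comp inr) b) := by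
    intro a b
    rw [← commutatorElement_eq_one_iff_commute]
    simp only [MonoidHom.comp_apply]
    rw [← map_commutatorElement]
    exact (QuotientGroup.eq_one_iff _).2 (hgen a b)
  have hq : q = ((q.comp inl).noncommCoprod (q.comp inr) hcomm).comp toProd := by
    apply Monoid.Coprod.hom_ext
    · ext a; simp
    · ext a; simp
  intro x hx
  have h1 : toProd x = 1 := Abelianization.commutator_subset_ker (toProd : Monoid.Coprod A B →* A × B) hx
  have h2 : q x = 1 := by rw [hq, MonoidHom.comp_apply, h1, map_one]
  exact (QuotientGroup.eq_one_iff _).1 h2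

open Classical in
/-- Magnus-type embedding into a wreath product. -/
noncomputable def magnus (A B : Type) [CommGroup A] [CommGroup B] :
    Monoid.Coprod A B →* RegularWreathProduct (Multiplicative ℤ) (A × B) :=
  Monoid.Coprod.lift
    (RegularWreathProduct.inl.comp (MonoidHom.inl A B))
    (((MulAut.conj (⟨Pi.mulSingle 1 (Multiplicative.ofAdd (-1)), 1⟩ :
      RegularWreathProduct (Multiplicative ℤ) (A × B))).toMonoidHom.comp
      RegularWreathProduct.inl).comp (MonoidHom.inr A B))

theorem magnus_right {A B : Type} [CommGroup A] [CommGroup B] (g : commutator (Monoid.Coprod A B)) :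
    (magnus A B g).right = 1 :=
  Abelianization.commutator_subset_ker
    (RegularWreathProduct.rightHom.comp (magnus A B)) g.2

/-- Coordinates. -/
noncomputable def psi (A B : Type) [CommGroup A] [CommGroup B] :
    commutator (Monoid.Coprod A B) →* ({a : A // a ≠ 1} × {b : B // b ≠ 1} → Multiplicative ℤ) where
  toFun g p := (magnus A B g).left (p.1, p.2)
  map_one' := by ext p; simp
  map_mul' x y := by
    ext p
    simp [magnus_right]

theorem magnus_comm {A B : Type} [CommGroup A] [CommGroup B] [DecidableEq A] [DecidableEq B]
    (a x : A) (b y : B) (hx : x ≠ 1) (hy : y ≠ 1) :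
    (magnus A B ⁅(Monoid.Coprod.inl a : Monoid.Coprod A B), (Monoid.Coprod.inr b : Monoid.Coprod A B)⁆).left (x, y) =
      if x = a ∧ y = b then Multiplicative.ofAdd 1 else 1 := by
  have e1 : a⁻¹ * x = 1 ↔ x = a := by rw [inv_mul_eq_one, eq_comm]
  have e2 : b⁻¹ * y = 1 ↔ y = b := by rw [inv_mul_eq_one, eq_comm]
  simp [commutatorElement_def, magnus, Pi.mulSingle_apply, hx, hy, Prod.ext_iff, e1, e2]
  split_ifs <;> simp

/-- Basic commutator. -/
def bc {A B : Type} [CommGroup A] [CommGroup B] (a : A) (b : B) :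
    commutator (Monoid.Coprod A B) :=
  ⟨⁅(Monoid.Coprod.inl a : Monoid.Coprod A B), (Monoid.Coprod.inr b : Monoid.Coprod A B)⁆,
    Subgroup.commutator_mem_commutator (Subgroup.mem_top _) (Subgroup.mem_top _)⟩

theorem main_equiv (A B : Type) [CommGroup A] [CommGroup B] [Finite A] [Finite B] :
    Nonempty (Abelianization (commutator (Monoid.Coprod A B)) ≃*
      ({a : A // a ≠ 1} × {b : B // b ≠ 1} → Multiplicative ℤ)) := by
  classical
  have := Fintype.ofFinite A
  have := Fintype.ofFinite B
  let S := {a : A // a ≠ 1} × {b : B // b ≠ 1}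
  let T := Abelianization (commutator (Monoid.Coprod A B))
  let gen : S → T := fun s => Abelianization.of (bc s.1.1 s.2.1)
  let θ : (S → Multiplicative ℤ) →* T :=
    MonoidHom.noncommPiCoprod (fun s => zpowersHom T (gen s)) (fun _ _ _ _ _ => mul_comm _ _)
  have hθ : ∀ s, θ (Pi.mulSingle s (Multiplicative.ofAdd 1)) = gen s := by
    intro s
    simp [θ, zpowersHom]
  let Ψ : T →* (S → Multiplicative ℤ) := Abelianization.lift (psi A B)
  have hΨ : ∀ s, Ψ (gen s) = Pi.mulSingle s (Multiplicative.ofAdd 1) := by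
    intro s
    ext t
    have := magnus_comm s.1.1 t.1.1 s.2.1 t.2.1 t.1.2 t.2.2
    simp only [Ψ, gen]
    refine congrArg _ (Eq.trans this ?_)
    have e : (t.1.1 = s.1.1 ∧ t.2.1 = s.2.1) ↔ t = s :=
      ⟨fun h => Prod.ext (Subtype.ext h.1) (Subtype.ext h.2), fun h => by rw [h]; simp⟩
    simp [Pi.mulSingle_apply, e]
  have hid : Ψ.comp θ = MonoidHom.id _ := by
    apply MonoidHom.functions_ext'
    intro s
    apply MonoidHom.ext_mint
    simp [hθ, hΨ]
  have hsurj : Function.Surjective θ := by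
    let L := (θ.range.comap Abelianization.of).map (commutator (Monoid.Coprod A B)).subtype
    have hL : commutator (Monoid.Coprod A B) ≤ L := by
      refine comm_le_closure.trans ?_
      rw [Subgroup.closure_le]
      rintro _ ⟨a, b, rfl⟩
      by_cases ha : a = 1
      · subst ha; simp
      by_cases hb : b = 1
      · subst hb; simp
      exact ⟨bc a b, ⟨_, hθ (⟨a, ha⟩, ⟨b, hb⟩)⟩, rfl⟩
    intro t
    obtain ⟨g, rfl⟩ := QuotientGroup.mk_surjective t
    obtain ⟨g', hg', h⟩ := hL g.2
    have : g' = g := Subtype.ext h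
    subst this
    exact hg'
  have hinj : Function.Injective θ := fun x y h => by
    have := congrArg Ψ h
    have e : ∀ z, Ψ (θ z) = z := fun z => DFunLike.congr_fun hid z
    rwa [e, e] at this
  exact ⟨(MulEquiv.ofBijective θ ⟨hinj, hsurj⟩).symm⟩

theorem card_ne_one_cyc (m : ℕ) (hm : 0 < m) : Nat.card {a : Cyc m // a ≠ 1} = m - 1 := by
  classical
  have : NeZero m := ⟨hm.ne'⟩
  rw [Nat.card_eq_fintype_card, Fintype.card_subtype_compl]
  simp [Fintype.card_multiplicative, ZMod.card]

/-- for `G = C_m ∗ C_n`, the abelianization of the derived subgroup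
`G'` of `G` is free abelian of rank `(m-1)(n-1)`, i.e. isomorphic to
`ℤ^((m-1)(n-1))`. -/
theorem stmt17 (m n : ℕ) (hm : 0 < m) (hn : 0 < n) :
    Nonempty (Abelianization (commutator (Monoid.Coprod (Cyc m) (Cyc n))) ≃*
      Multiplicative (Fin ((m - 1) * (n - 1)) → ℤ)) := by
  have : NeZero m := ⟨hm.ne'⟩
  have : NeZero n := ⟨hn.ne'⟩
  have : Finite (Cyc m) := inferInstanceAs (Finite (ZMod m))
  have : Finite (Cyc n) := inferInstanceAs (Finite (ZMod n))
  obtain ⟨e⟩ := main_equiv (Cyc m) (Cyc n)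
  have hc : Nat.card ({a : Cyc m // a ≠ 1} × {b : Cyc n // b ≠ 1}) = (m - 1) * (n - 1) := by
    rw [Nat.card_prod, card_ne_one_cyc m hm, card_ne_one_cyc n hn]
  let f := Finite.equivFinOfCardEq hc
  refine ⟨e.trans ?_⟩
  exact
    { toFun := fun x => Multiplicative.ofAdd fun i => Multiplicative.toAdd (x (f.symm i))
      invFun := fun y s => Multiplicative.ofAdd (Multiplicative.toAdd y (f s))
      left_inv := fun x => by ext s; simp
      right_inv := fun y => by
        apply Multiplicative.toAdd.injective
        funext i
        simp
      map_mul' := fun x y => rfl }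
end
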